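/- Atomic CQ entailment is undecidable both over fus+trans knowledge bases and over fes+trans knowledge bases; that is, it is undecidable, given a fact base F, a rule set R consisting of a finite unification set (respectively, a finite expansion set) of existential rules together with transitivity rules, and an atomic Boolean conjunctive query Q, whether F, R ⊨ Q. -/

import Mathlib

set_option autoImplicit false

/-! ## First-order vocabulary: terms, atoms, existential rules -/

/-- Terms: variables and constants, both indexed by natural numbers. -/
inductive FTerm where
  | var : ℕ → FTerm
  | const : ℕ → FTerm
deriving DecidableEq

instance : Inhabited FTerm := ⟨.var 0⟩

def FTerm.equivSum : FTerm ≃ ℕ ⊕ ℕ where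
  toFun t := match t with | .var n => .inl n | .const n => .inr n
  invFun s := match s with | .inl n => .var n | .inr n => .const n
  left_inv t := by cases t <;> rfl
  right_inv s := by cases s <;> rfl

instance : Primcodable FTerm := Primcodable.ofEquiv (ℕ ⊕ ℕ) FTerm.equivSum

/-- A (function-free) atom: a predicate applied to a list of terms. -/
structure FAtom where
  pred : ℕ
  args : List FTerm
deriving DecidableEq

def FAtom.equivProd : FAtom ≃ ℕ × List FTerm where
  toFun a := (a.pred, a.args)
  invFun p := ⟨p.1, p.2⟩
  left_inv a := rfl
  right_inv p := rfl

instance : Primcodable FAtom := Primcodable.ofEquiv (ℕ × List FTerm) FAtom.equivProd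

/-- An existential rule `B → H`, given by its body and head (finite conjunctions of atoms).
Variables occurring in the head but not in the body are (implicitly) existentially
quantified; all other variables are universally quantified. -/
structure ERule where
  body : List FAtom
  head : List FAtom
deriving DecidableEq

def ERule.equivProd : ERule ≃ List FAtom × List FAtom where
  toFun r := (r.body, r.head)
  invFun p := ⟨p.1, p.2⟩
  left_inv r := rfl
  right_inv p := rfl

instance : Primcodable ERule := Primcodable.ofEquiv (List FAtom × List FAtom) ERule.equivProd

/-! ## Semantics -/

/-- A first-order interpretation. -/
structure Interp where
  Dom : Type
  inh : Nonempty Dom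
  rel : ℕ → List Dom → Prop
  cst : ℕ → Dom

def FTerm.eval (I : Interp) (ν : ℕ → I.Dom) : FTerm → I.Dom
  | .var n => ν n
  | .const n => I.cst n

def FAtom.sat (I : Interp) (ν : ℕ → I.Dom) (a : FAtom) : Prop :=
  I.rel a.pred (a.args.map (FTerm.eval I ν))

/-- Satisfaction of a Boolean conjunctive query (existential closure of a conjunction). -/
def satCQ (I : Interp) (Q : List FAtom) : Prop := ∃ ν, ∀ a ∈ Q, a.sat I ν

def satFacts (I : Interp) (F : List FAtom) : Prop := ∀ ν, ∀ a ∈ F, a.sat I ν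

def atomsVars (l : List FAtom) : Set ℕ := {v | ∃ a ∈ l, FTerm.var v ∈ a.args}
def atomsTerms (l : List FAtom) : Set FTerm := {t | ∃ a ∈ l, t ∈ a.args}
def atomsPreds (l : List FAtom) : Set ℕ := {q | ∃ a ∈ l, a.pred = q}
def rulesPreds (Rs : List ERule) : Set ℕ := {q | ∃ r ∈ Rs, q ∈ atomsPreds (r.body ++ r.head)}
def atomsConsts (l : List FAtom) : Set ℕ := {c | FTerm.const c ∈ atomsTerms l}

/-- Frontier variables of a rule. -/
def ERule.frontierV (R : ERule) : Set ℕ := atomsVars R.body ∩ atomsVars R.head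
/-- Existential variables of a rule. -/
def ERule.exV (R : ERule) : Set ℕ := atomsVars R.head \ atomsVars R.body

def ERule.sat (I : Interp) (R : ERule) : Prop :=
  ∀ ν, (∀ a ∈ R.body, a.sat I ν) →
    ∃ ν', (∀ v ∈ atomsVars R.body, ν' v = ν v) ∧ ∀ a ∈ R.head, a.sat I ν'

/-- First-order entailment of a Boolean CQ from a knowledge base. -/
def entails (F : List FAtom) (Rs : List ERule) (Q : List FAtom) : Prop :=
  ∀ I : Interp, satFacts I F → (∀ r ∈ Rs, r.sat I) → satCQ I Q

/-- First-order entailment of a union of Boolean CQs. -/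
def entailsUCQ (F : List FAtom) (Rs : List ERule) (Qs : List (List FAtom)) : Prop :=
  ∀ I : Interp, satFacts I F → (∀ r ∈ Rs, r.sat I) → ∃ Q ∈ Qs, satCQ I Q

def FAtom.isGround (a : FAtom) : Prop := ∀ t ∈ a.args, ∃ c, t = FTerm.const c
def isFactBase (F : List FAtom) : Prop := ∀ a ∈ F, a.isGround

/-! ## Substitutions and piece-unifiers -/

def FTerm.subst (σ : ℕ → FTerm) : FTerm → FTerm
  | .var n => σ n
  | .const n => .const n

def FAtom.subst (σ : ℕ → FTerm) (a : FAtom) : FAtom := ⟨a.pred, a.args.map (FTerm.subst σ)⟩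

/-- A piece-unifier of a CQ `Q` with a rule `R`, presented by a unifying substitution `σ`
(obtained from the admissible partition of the terms of `piece ∪ hpiece`):
`σ(piece) = σ(hpiece)` and every term merged with an existential variable of `R`
is a variable of the piece not occurring in the rest of `Q`. -/
structure PieceUnifier (Q : List FAtom) (R : ERule) where
  piece : List FAtom
  hpiece : List FAtom
  σ : ℕ → FTerm
  piece_ne : piece ≠ []
  piece_sub : ∀ a ∈ piece, a ∈ Q
  hpiece_sub : ∀ a ∈ hpiece, a ∈ R.head
  unif : {x : FAtom | ∃ b ∈ piece, x = b.subst σ} = {x : FAtom | ∃ b ∈ hpiece, x = b.subst σ}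
  exCond : ∀ z ∈ R.exV, ∀ t ∈ atomsTerms (piece ++ hpiece),
      FTerm.subst σ t = σ z → t ≠ FTerm.var z →
      ∃ v, t = FTerm.var v ∧ FTerm.var v ∈ atomsTerms piece ∧
        FTerm.var v ∉ atomsTerms (Q.filter (fun a => decide (a ∉ piece)))

def pieceUnifiable (Q : List FAtom) (R : ERule) : Prop := Nonempty (PieceUnifier Q R)

/-- `R₂` depends on `R₁` if there is a piece-unifier of the body of `R₂` with the head of `R₁`. -/
def ruleDependsOn (R₂ R₁ : ERule) : Prop := pieceUnifiable R₂.body R₁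

/-- A rule set is aGRD if its graph of rule dependencies (edge from `R₁` to `R₂`
whenever `R₂` depends on `R₁`) is acyclic. -/
def isAGRD (Rs : List ERule) : Prop :=
  ∀ r ∈ Rs, ¬ Relation.TransGen (fun r₁ r₂ => r₁ ∈ Rs ∧ r₂ ∈ Rs ∧ ruleDependsOn r₂ r₁) r r

/-- The (classical) direct rewriting of `Q` with `R` w.r.t. a piece-unifier `μ`
is `σ(Q ∖ piece) ∪ σ(body R)` (as a set of atoms). -/
def directRewriting (Q Q' : List FAtom) (R : ERule) : Prop :=
  ∃ μ : PieceUnifier Q R,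
    {x : FAtom | x ∈ Q'} =
      {x | ∃ b ∈ Q.filter (fun a => decide (a ∉ μ.piece)), x = b.subst μ.σ} ∪
      {x | ∃ b ∈ R.body, x = b.subst μ.σ}

/-- `Q'` is a rewriting of `Q` w.r.t. the rule set `Rs`: a finite sequence of direct rewritings. -/
def isRewriting (Rs : List ERule) (Q Q' : List FAtom) : Prop :=
  Relation.ReflTransGen (fun q q' => ∃ r ∈ Rs, directRewriting q q' r) Q Q'

/-! ## Transitivity and linear rules -/

/-- `R` is the transitivity rule `p(x,y) ∧ p(y,z) → p(x,z)` for predicate `p`. -/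
def isTransitivityRuleOn (p : ℕ) (R : ERule) : Prop :=
  ∃ x y z : ℕ, x ≠ y ∧ y ≠ z ∧ x ≠ z ∧
    R.body = [⟨p, [.var x, .var y]⟩, ⟨p, [.var y, .var z]⟩] ∧
    R.head = [⟨p, [.var x, .var z]⟩]

def isTransitivityRule (R : ERule) : Prop := ∃ p, isTransitivityRuleOn p R

/-- A canonical transitivity rule for predicate `p`. -/
def transRule (p : ℕ) : ERule :=
  ⟨[⟨p, [.var 0, .var 1]⟩, ⟨p, [.var 1, .var 2]⟩], [⟨p, [.var 0, .var 2]⟩]⟩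

/-- A linear rule: single-atom body and no constants. -/
def isLinearRule (R : ERule) : Prop :=
  (∃ a, R.body = [a]) ∧ ∀ t ∈ atomsTerms (R.body ++ R.head), ∀ c, t ≠ FTerm.const c

/-- `I` is a universal model of the KB `(F, Rs)`:
it is a model, and it satisfies exactly the CQs entailed by the KB. -/
def isUniversalModel (I : Interp) (F : List FAtom) (Rs : List ERule) : Prop :=
  satFacts I F ∧ (∀ r ∈ Rs, r.sat I) ∧ ∀ Q : List FAtom, (satCQ I Q ↔ entails F Rs Q)

/-- A finite expansion set: every KB `(F, Rs)` has a finite universal model. -/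
def isFES (Rs : List ERule) : Prop :=
  ∀ F, isFactBase F → ∃ I : Interp, Finite I.Dom ∧ isUniversalModel I F Rs

/-- A finite unification set: for every CQ `Q` there is a finite set `S` of rewritings of
`Q` w.r.t. `Rs` such that for every fact base `F`, `F, Rs ⊨ Q` iff `F ⊨ Q'` for some `Q' ∈ S`. -/
def isFUS (Rs : List ERule) : Prop :=
  ∀ Q : List FAtom, ∃ S : List (List FAtom),
    (∀ Q' ∈ S, isRewriting Rs Q Q') ∧
    ∀ F, isFactBase F → (entails F Rs Q ↔ ∃ Q' ∈ S, entails F [] Q')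

/-!
The halting problem is reduced to entailment. A two-stack machine is run inside a model whose nodes
stand for stacks and configurations, and a single existential rule performs its steps: it matches a
configuration, the split of its first stack and a row of the instruction table, and creates the
pushed stack and the next configurations. The point is that the edges from the new nodes to the
pushed stack are not created; only paths of length two through elements that are not nodes are, and
transitivity turns these into edges. Hence without transitivity new nulls never take part in a match
of the body, and one round of rule applications yields a finite universal model. This bounds
rewritings as well: in a query matched into this model, the atoms sent to nulls can be erased in
favour of one copy of the body each, and if none of them is a node they even fold onto a dump
element that the body requires. With transitivity for the two kinds of edges, the goal is entailed
exactly when the machine halts, and machines simulating a universal Turing machine make this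
undecidable.
-/

/-! ### Interpretations and homomorphisms -/

theorem FTerm.eval_subst (I : Interp) (ν : ℕ → I.Dom) (σ : ℕ → FTerm) (t : FTerm) :
    (t.subst σ).eval I ν = t.eval I fun j => (σ j).eval I ν := by
  cases t <;> rfl

theorem FAtom.sat_subst {I : Interp} {ν : ℕ → I.Dom} {σ : ℕ → FTerm} {a : FAtom} :
    (a.subst σ).sat I ν ↔ a.sat I fun j => (σ j).eval I ν := by
  simp [FAtom.sat, FAtom.subst, Function.comp_def, FTerm.eval_subst]

theorem FTerm.subst_var (t : FTerm) : t.subst FTerm.var = t := by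
  cases t <;> rfl

theorem FAtom.subst_var (a : FAtom) : a.subst FTerm.var = a := by
  cases a
  simp only [FAtom.subst, FAtom.mk.injEq, true_and]
  exact (List.map_congr_left fun t _ => t.subst_var).trans (List.map_id _)

theorem FAtom.subst_subst (σ σ' : ℕ → FTerm) (a : FAtom) :
    (a.subst σ).subst σ' = a.subst fun j => (σ j).subst σ' := by
  simp only [FAtom.subst, List.map_map, FAtom.mk.injEq, true_and]
  exact List.map_congr_left fun t _ => by cases t <;> rfl

theorem FAtom.subst_congr {σ σ' : ℕ → FTerm} {a : FAtom}
    (h : ∀ v, .var v ∈ a.args → σ v = σ' v) : a.subst σ = a.subst σ' := by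
  simp only [FAtom.subst, FAtom.mk.injEq, true_and]
  refine List.map_congr_left fun t ht => ?_
  cases t with
  | var v => exact h v ht
  | const n => rfl

theorem FAtom.sat_congr {I : Interp} {ν ν' : ℕ → I.Dom} {a : FAtom}
    (h : ∀ v, .var v ∈ a.args → ν v = ν' v) : a.sat I ν ↔ a.sat I ν' := by
  have : a.args.map (FTerm.eval I ν) = a.args.map (FTerm.eval I ν') := by
    refine List.map_congr_left fun t ht => ?_
    cases t with
    | var v => exact h v ht
    | const n => rfl
  rw [FAtom.sat, FAtom.sat, this]

theorem FAtom.isGround.exists_args_eq {a : FAtom} (h : a.isGround) :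
    ∃ cs : List ℕ, a = ⟨a.pred, cs.map FTerm.const⟩ := by
  have hts : a.args ∈ Set.range (List.map FTerm.const) := by
    rw [Set.range_list_map]
    exact fun t ht => (h t ht).imp fun c hc => hc.symm
  obtain ⟨cs, hcs⟩ := hts
  exact ⟨cs, by rw [hcs]⟩

theorem ERule.sat_of_head_subset {I : Interp} {R : ERule} (h : ∀ a ∈ R.head, a ∈ R.body) :
    R.sat I :=
  fun ν hb => ⟨ν, fun _ _ => rfl, fun a ha => hb a (h a ha)⟩

/-- Homomorphisms of interpretations, required to respect the constants. -/
structure IsHom (I M : Interp) (g : I.Dom → M.Dom) : Prop where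
  map_cst : ∀ n, g (I.cst n) = M.cst n
  map_rel : ∀ p l, I.rel p l → M.rel p (l.map g)

namespace IsHom

variable {I M : Interp} {g : I.Dom → M.Dom}

theorem map_eval (hg : IsHom I M g) (ν : ℕ → I.Dom) (t : FTerm) :
    g (t.eval I ν) = t.eval M (g ∘ ν) := by
  cases t with
  | var n => rfl
  | const n => exact hg.map_cst n

theorem sat (hg : IsHom I M g) {ν : ℕ → I.Dom} {a : FAtom} (h : a.sat I ν) :
    a.sat M (g ∘ ν) := by
  simpa only [FAtom.sat, List.map_map, Function.comp_def, hg.map_eval] using hg.map_rel _ _ h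

theorem satCQ (hg : IsHom I M g) {Q : List FAtom} : satCQ I Q → satCQ M Q :=
  fun ⟨_, hν⟩ => ⟨_, fun a ha => hg.sat (hν a ha)⟩

end IsHom

theorem isUniversalModel_of_isHom {I : Interp} {F : List FAtom} {Rs : List ERule}
    (hF : satFacts I F) (hRs : ∀ r ∈ Rs, r.sat I)
    (hom : ∀ M : Interp, satFacts M F → (∀ r ∈ Rs, r.sat M) → ∃ g, IsHom I M g) :
    isUniversalModel I F Rs := by
  refine ⟨hF, hRs, fun Q => ⟨fun hQ M hMF hMR => ?_, fun hQ => hQ I hF hRs⟩⟩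
  obtain ⟨g, hg⟩ := hom M hMF hMR
  exact hg.satCQ hQ

/-- The interpretation over the constants in which exactly the facts of `F` hold. -/
abbrev factInterp (F : List FAtom) : Interp where
  Dom := ℕ
  inh := ⟨0⟩
  rel p cs := ⟨p, cs.map FTerm.const⟩ ∈ F
  cst := id

/-- The ground substitution given by an assignment of constants. -/
abbrev groundSubst (τ : ℕ → ℕ) (v : ℕ) : FTerm := .const (τ v)

theorem sat_factInterp {F : List FAtom} {τ : ℕ → ℕ} {a : FAtom} :
    a.sat (factInterp F) τ ↔ a.subst (groundSubst τ) ∈ F := by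
  have : (a.args.map (FTerm.eval (factInterp F) τ)).map FTerm.const =
      a.args.map (FTerm.subst (groundSubst τ)) := by
    rw [List.map_map]
    exact List.map_congr_left fun t _ => by cases t <;> rfl
  rw [FAtom.sat, FAtom.subst, ← this]

theorem FAtom.isGround.subst_eq {a : FAtom} (h : a.isGround) (σ : ℕ → FTerm) :
    a.subst σ = a := by
  refine (FAtom.subst_congr fun v hv => ?_).trans a.subst_var
  obtain ⟨c, hc⟩ := h _ hv
  cases hc

theorem isUniversalModel_factInterp {F : List FAtom} (hF : isFactBase F) :
    isUniversalModel (factInterp F) F [] := by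
  refine isUniversalModel_of_isHom (fun ν a ha => ?_) (by simp) fun M hM _ =>
    ⟨M.cst, fun _ => rfl, fun p (cs : List ℕ) h => ?_⟩
  · rwa [sat_factInterp, (hF a ha).subst_eq]
  · have := hM (fun _ => M.cst 0) _ h
    rwa [FAtom.sat, List.map_map] at this

theorem entails_nil_iff {F Q : List FAtom} (hF : isFactBase F) :
    entails F [] Q ↔ ∃ τ : ℕ → ℕ, ∀ a ∈ Q, a.subst (groundSubst τ) ∈ F := by
  simp only [← (isUniversalModel_factInterp hF).2.2 Q, satCQ, sat_factInterp]

/-! ### Finite support -/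

section FiniteSupport

variable {I : Interp} {D : Set I.Dom}

open Classical in
/-- The collapse of all elements outside `D` to one extra point `none`. -/
noncomputable def collapse (D : Set I.Dom) (v : I.Dom) : Option D :=
  if h : v ∈ D then some ⟨v, h⟩ else none

/-- The homomorphic image of `I` under `collapse D`. -/
noncomputable abbrev collapseInterp (D : Set I.Dom) : Interp where
  Dom := Option D
  inh := ⟨none⟩
  rel p l := ∃ l₀, I.rel p l₀ ∧ l = l₀.map (collapse D)
  cst n := collapse D (I.cst n)

theorem isHom_collapse (D : Set I.Dom) : IsHom I (collapseInterp D) (collapse D) :=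
  ⟨fun _ => rfl, fun _ l h => ⟨l, h, rfl⟩⟩

/-- A section of `collapse D` on `D`. -/
noncomputable def uncollapse : Option D → I.Dom
  | some v => v
  | none => I.inh.some

theorem uncollapse_collapse {v : I.Dom} (hv : v ∈ D) : uncollapse (collapse D v) = v := by
  simp [collapse, hv, uncollapse]

theorem collapse_uncollapse {x : Option D} (hx : x ≠ none) : collapse D (uncollapse x) = x := by
  obtain ⟨v, rfl⟩ := Option.ne_none_iff_exists'.1 hx
  simp [collapse, uncollapse]

theorem eval_collapseInterp_ne_none (hD : ∀ p l, I.rel p l → ∀ v ∈ l, v ∈ D)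
    {ν : ℕ → Option D} {a : FAtom} (h : a.sat (collapseInterp D) ν) {t : FTerm}
    (ht : t ∈ a.args) : t.eval (collapseInterp D) ν ≠ none := by
  obtain ⟨l₀, hl₀, h⟩ := h
  have hmem : t.eval (collapseInterp D) ν ∈ l₀.map (collapse D) := h ▸ List.mem_map_of_mem ht
  obtain ⟨v, hv, hvt⟩ := List.mem_map.1 hmem
  simp [← hvt, collapse, hD _ _ hl₀ v hv]

theorem sat_of_sat_collapseInterp (hD : ∀ p l, I.rel p l → ∀ v ∈ l, v ∈ D)
    {ν : ℕ → Option D} {a : FAtom} (h : a.sat (collapseInterp D) ν) :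
    a.sat I (uncollapse ∘ ν) := by
  have hne := fun t ht => eval_collapseInterp_ne_none hD h (t := t) ht
  obtain ⟨l₀, hl₀, h⟩ := h
  have hargs : a.args.map (FTerm.eval I (uncollapse ∘ ν)) = l₀ := by
    have hsec : (l₀.map (collapse D)).map uncollapse = l₀ := by
      rw [List.map_map]
      exact (List.map_congr_left fun v hv => uncollapse_collapse (hD _ _ hl₀ v hv)).trans
        (List.map_id _)
    rw [← hsec, ← h, List.map_map]
    refine List.map_congr_left fun t ht => ?_
    cases t with
    | var n => rfl
    | const n =>
      have hn : collapse D (I.cst n) ≠ none := hne _ ht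
      have hmem : I.cst n ∈ D := by
        by_contra hn'
        simp [collapse, hn'] at hn
      exact (uncollapse_collapse hmem).symm
  rw [FAtom.sat, hargs]
  exact hl₀

theorem isUniversalModel.collapse {F : List FAtom} {Rs : List ERule} (hFB : isFactBase F)
    (hI : isUniversalModel I F Rs) (hD : ∀ p l, I.rel p l → ∀ v ∈ l, v ∈ D) :
    isUniversalModel (collapseInterp D) F Rs := by
  obtain ⟨hF, hRs, hQ⟩ := hI
  refine ⟨fun ν a ha => ?_, fun r hr ν hb => ?_, fun Q => ?_⟩
  · have hsat := (isHom_collapse D).sat (hF (fun _ => I.inh.some) a ha)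
    refine (FAtom.sat_congr fun v hv => ?_).1 hsat
    obtain ⟨c, hc⟩ := hFB a ha _ hv
    cases hc
  · obtain ⟨ν', hν', hh⟩ := hRs r hr _ fun a ha => sat_of_sat_collapseInterp hD (hb a ha)
    refine ⟨_, fun v hv => ?_, fun a ha => (isHom_collapse D).sat (hh a ha)⟩
    obtain ⟨a, ha, hva⟩ := hv
    rw [Function.comp_apply, hν' v ⟨a, ha, hva⟩]
    exact collapse_uncollapse (eval_collapseInterp_ne_none hD (hb a ha) hva)
  · rw [← hQ Q]
    exact ⟨fun ⟨_, hν⟩ => ⟨_, fun a ha => sat_of_sat_collapseInterp hD (hν a ha)⟩,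
      (isHom_collapse D).satCQ⟩

end FiniteSupport

/-! ### Finitely many variables and constants -/

theorem mem_flatMap_args {l : List FAtom} {t : FTerm} :
    t ∈ l.flatMap FAtom.args ↔ t ∈ atomsTerms l := List.mem_flatMap

theorem finite_atomsVars (l : List FAtom) : (atomsVars l).Finite := by
  refine ((l.flatMap FAtom.args).finite_toSet.preimage (f := FTerm.var) ?_).subset fun v hv => ?_
  · exact fun _ _ _ _ h => FTerm.var.inj h
  · exact mem_flatMap_args.2 hv

theorem finite_atomsConsts (l : List FAtom) : (atomsConsts l).Finite := by
  refine ((l.flatMap FAtom.args).finite_toSet.preimage (f := FTerm.const) ?_).subset fun c hc => ?_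
  · exact fun _ _ _ _ h => FTerm.const.inj h
  · exact mem_flatMap_args.2 hc

theorem exists_vars_lt (l : List FAtom) : ∃ k, ∀ v ∈ atomsVars l, v < k :=
  have ⟨k, hk⟩ := (finite_atomsVars l).bddAbove
  ⟨k + 1, fun _ hv => Nat.lt_succ_of_le (hk hv)⟩

/-! ### Adding a propositional goal -/

theorem directRewriting_of_subst_eq {Q Q' : List FAtom} {R : ERule} {a b : FAtom} (ha : a ∈ Q)
    (hb : b ∈ R.head) (σ : ℕ → FTerm) (hab : a.subst σ = b.subst σ)
    (hex : ∀ z ∈ R.exV, ∀ t, t ∈ a.args ∨ t ∈ b.args → t.subst σ = σ z → t = .var z)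
    (hQ' : ∀ x, x ∈ Q' ↔
      (∃ c ∈ Q, c ≠ a ∧ x = c.subst σ) ∨ ∃ c ∈ R.body, x = c.subst σ) :
    directRewriting Q Q' R := by
  refine ⟨⟨[a], [b], σ, by simp, by simpa, by simpa, by simp [hab], fun z hz t ht h hne => ?_⟩, ?_⟩
  · exact absurd (hex z hz t (by simpa [atomsTerms] using ht) h) hne
  · ext x
    simp [hQ', and_assoc]

/-- The renaming of variables `v ↦ v + k`. -/
def shiftVar (k v : ℕ) : FTerm := .var (v + k)

theorem satCQ_append_shiftVar {I : Interp} {b Q : List FAtom} {k : ℕ}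
    (hk : ∀ v ∈ atomsVars b, v < k) :
    satCQ I (b ++ Q.map (FAtom.subst (shiftVar k))) ↔ satCQ I b ∧ satCQ I Q := by
  constructor
  · rintro ⟨ν, hν⟩
    exact ⟨⟨ν, fun a ha => hν a (by simp [ha])⟩, _, fun a ha =>
      FAtom.sat_subst.1 (hν (a.subst (shiftVar k)) (by simpa using .inr ⟨a, ha, rfl⟩))⟩
  · rintro ⟨⟨νb, hb⟩, νQ, hQ⟩
    refine ⟨fun v => if v < k then νb v else νQ (v - k), fun a ha => ?_⟩
    rcases List.mem_append.1 ha with ha | ha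
    · exact (FAtom.sat_congr fun v hv => (if_pos (hk v ⟨a, ha, hv⟩)).symm).1 (hb a ha)
    · obtain ⟨c, hc, rfl⟩ := List.mem_map.1 ha
      simpa [FAtom.sat_subst, shiftVar, FTerm.eval] using hQ c hc

section Goal

variable {F b : List FAtom} {Rs : List ERule} {g : ℕ}

/-- The rule `b → g()` and the tautology `g() → g()`. Rewriting with the latter renames the
variables of a query apart from those of `b`. -/
def goalRules (b : List FAtom) (g : ℕ) : List ERule := [⟨b, [⟨g, []⟩]⟩, ⟨[⟨g, []⟩], [⟨g, []⟩]⟩]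

theorem entails_goal_of_entails_body (h : entails F Rs b) :
    entails F (goalRules b g ++ Rs) [⟨g, []⟩] := by
  intro M hF hRs
  obtain ⟨ν, hν⟩ := h M hF fun r hr => hRs r (by simp [hr])
  obtain ⟨ν', -, h⟩ := hRs ⟨b, [⟨g, []⟩]⟩ (by simp [goalRules]) ν hν
  exact ⟨ν', h⟩

/-- `I` with the proposition `g()` made true whenever `b` holds. -/
abbrev Interp.addGoal (I : Interp) (b : List FAtom) (g : ℕ) : Interp :=
  { I with rel := fun p l => I.rel p l ∨ (p = g ∧ l = [] ∧ satCQ I b) }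

variable {I : Interp}

theorem FAtom.sat_addGoal {ν : ℕ → I.Dom} {a : FAtom} :
    a.sat (I.addGoal b g) ν ↔ a.sat I ν ∨ (a = ⟨g, []⟩ ∧ satCQ I b) := by
  have heval : FTerm.eval (I.addGoal b g) ν = FTerm.eval I ν := by
    funext t
    cases t <;> rfl
  cases a
  simp [FAtom.sat, heval, and_assoc]

theorem FAtom.sat_addGoal_of_pred_ne {ν : ℕ → I.Dom} {a : FAtom} (h : a.pred ≠ g) :
    a.sat (I.addGoal b g) ν ↔ a.sat I ν := by
  rw [FAtom.sat_addGoal, or_iff_left]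
  rintro ⟨rfl, -⟩
  exact h rfl

theorem satCQ_addGoal {Q : List FAtom} :
    satCQ (I.addGoal b g) Q ↔ satCQ I Q ∨ satCQ I b ∧ satCQ I (Q.filter (· ≠ ⟨g, []⟩)) := by
  constructor
  · rintro ⟨ν, hν⟩
    replace hν := fun a ha => FAtom.sat_addGoal.1 (hν a ha)
    by_cases hb : satCQ I b
    · exact .inr ⟨hb, ν, fun a ha => have ⟨ha, hne⟩ := List.mem_filter.1 ha
        (hν a ha).resolve_right fun h => of_decide_eq_true hne h.1⟩
    · exact .inl ⟨ν, fun a ha => (hν a ha).resolve_right fun h => hb h.2⟩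
  · rintro (⟨ν, hν⟩ | ⟨hb, ν, hν⟩)
    · exact ⟨ν, fun a ha => .inl (hν a ha)⟩
    · refine ⟨ν, fun a ha => FAtom.sat_addGoal.2 ?_⟩
      by_cases h : a = ⟨g, []⟩
      · exact .inr ⟨h, hb⟩
      · exact .inl (hν a (List.mem_filter.2 ⟨ha, decide_eq_true h⟩))

theorem ERule.sat_addGoal {R : ERule} (hR : ∀ a ∈ R.body ++ R.head, a.pred ≠ g) :
    R.sat (I.addGoal b g) ↔ R.sat I := by
  have hbody (ν : ℕ → I.Dom) :
      (∀ a ∈ R.body, a.sat (I.addGoal b g) ν) ↔ ∀ a ∈ R.body, a.sat I ν :=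
    forall₂_congr fun a ha => FAtom.sat_addGoal_of_pred_ne (hR a (by simp [ha]))
  have hhead (ν : ℕ → I.Dom) :
      (∀ a ∈ R.head, a.sat (I.addGoal b g) ν) ↔ ∀ a ∈ R.head, a.sat I ν :=
    forall₂_congr fun a ha => FAtom.sat_addGoal_of_pred_ne (hR a (by simp [ha]))
  simp only [ERule.sat, hbody, hhead]

theorem ERule.sat_addGoal_of_mem (hI : ∀ r ∈ Rs, r.sat I) (hRs : g ∉ rulesPreds Rs)
    (hb : g ∉ atomsPreds b) : ∀ r ∈ goalRules b g ++ Rs, r.sat (I.addGoal b g) := by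
  simp only [goalRules, List.mem_append, List.mem_cons, List.not_mem_nil, or_false]
  rintro r ((rfl | rfl) | hr)
  · intro ν hν
    refine ⟨ν, fun _ _ => rfl, fun a ha => FAtom.sat_addGoal.2 (.inr ⟨by simpa using ha, ν, ?_⟩)⟩
    exact fun c hc => (FAtom.sat_addGoal_of_pred_ne fun h => hb ⟨c, hc, h⟩).1 (hν c hc)
  · exact ERule.sat_of_head_subset fun a ha => ha
  · exact (ERule.sat_addGoal fun a ha h => hRs ⟨r, hr, a, ha, h⟩).2 (hI r hr)

theorem satCQ_body_of_entails_goal (h : entails F (goalRules b g ++ Rs) [⟨g, []⟩])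
    (hF : satFacts I F) (hR : ∀ r ∈ Rs, r.sat I) (hRs : g ∉ rulesPreds Rs)
    (hb : g ∉ atomsPreds b) (hg : ¬I.rel g []) : satCQ I b := by
  obtain ⟨ν, hν⟩ := h (I.addGoal b g) (fun ν a ha => .inl (hF ν a ha))
    (ERule.sat_addGoal_of_mem hR hRs hb)
  exact ((hν ⟨g, []⟩ List.mem_cons_self).resolve_left hg).2.2

theorem isUniversalModel.addGoal (hI : isUniversalModel I F Rs) (hRs : g ∉ rulesPreds Rs)
    (hb : g ∉ atomsPreds b) : isUniversalModel (I.addGoal b g) F (goalRules b g ++ Rs) := by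
  obtain ⟨hIF, hIR, hIQ⟩ := hI
  have hF : satFacts (I.addGoal b g) F := fun ν a ha => .inl (hIF ν a ha)
  have hR := ERule.sat_addGoal_of_mem hIR hRs hb
  refine ⟨hF, hR, fun Q => ⟨fun hQ M hMF hMR => ?_, fun hQ => hQ _ hF hR⟩⟩
  have hMRs : ∀ r ∈ Rs, r.sat M := fun r hr => hMR r (by simp [hr])
  rcases satCQ_addGoal.1 hQ with hQ | ⟨hbI, hQ⟩
  · exact (hIQ Q).1 hQ M hMF hMRs
  · obtain ⟨ν, hν⟩ := (hIQ _).1 hQ M hMF hMRs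
    obtain ⟨_, hg⟩ := entails_goal_of_entails_body ((hIQ b).1 hbI) M hMF hMR
    refine ⟨ν, fun a ha => ?_⟩
    by_cases h : a = ⟨g, []⟩
    · exact h ▸ hg ⟨g, []⟩ (by simp)
    · exact hν a (by simp [ha, h])

theorem isFES.addGoal (h : isFES Rs) (hRs : g ∉ rulesPreds Rs) (hb : g ∉ atomsPreds b) :
    isFES (goalRules b g ++ Rs) := fun F hF =>
  have ⟨I, hI, hu⟩ := h F hF
  ⟨I.addGoal b g, hI, hu.addGoal hRs hb⟩

theorem entails_goalRules_append (hI : isUniversalModel I F Rs) (hRs : g ∉ rulesPreds Rs)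
    (hb : g ∉ atomsPreds b) {k : ℕ} (hk : ∀ v ∈ atomsVars b, v < k) (Q : List FAtom) :
    entails F (goalRules b g ++ Rs) Q ↔ entails F Rs Q ∨
      entails F Rs (b ++ (Q.filter (· ≠ ⟨g, []⟩)).map (FAtom.subst (shiftVar k))) := by
  rw [← (hI.addGoal hRs hb).2.2, satCQ_addGoal, ← hI.2.2, ← hI.2.2, satCQ_append_shiftVar hk]

theorem isRewriting_goalRules {Q : List FAtom} (hQ : ⟨g, []⟩ ∈ Q) (k : ℕ) :
    isRewriting (goalRules b g) Q
      (b ++ (Q.filter (· ≠ ⟨g, []⟩)).map (FAtom.subst (shiftVar k))) := by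
  have hexV (b : List FAtom) : ERule.exV ⟨b, [⟨g, []⟩]⟩ = ∅ := by
    simp [ERule.exV, atomsVars]
  have hne : ∀ c ∈ (Q.filter (· ≠ ⟨g, []⟩)).map (FAtom.subst (shiftVar k)), c ≠ ⟨g, []⟩ := by
    rintro _ hc rfl
    obtain ⟨⟨p, ts⟩, hc, h⟩ := List.mem_map.1 hc
    simp_all [FAtom.subst]
  have hrename : directRewriting Q
      (⟨g, []⟩ :: (Q.filter (· ≠ ⟨g, []⟩)).map (FAtom.subst (shiftVar k)))
      ⟨[⟨g, []⟩], [⟨g, []⟩]⟩ := by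
    refine directRewriting_of_subst_eq hQ (b := ⟨g, []⟩) (by simp) (shiftVar k) rfl
      (by simp [hexV]) fun x => ?_
    simp only [List.mem_cons, List.mem_map, List.mem_filter, List.not_mem_nil, or_false]
    grind [FAtom.subst]
  have hgoal : directRewriting
      (⟨g, []⟩ :: (Q.filter (· ≠ ⟨g, []⟩)).map (FAtom.subst (shiftVar k)))
      (b ++ (Q.filter (· ≠ ⟨g, []⟩)).map (FAtom.subst (shiftVar k))) ⟨b, [⟨g, []⟩]⟩ := by
    refine directRewriting_of_subst_eq (a := ⟨g, []⟩) (b := ⟨g, []⟩) (by simp) (by simp) .var rfl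
      (by simp [hexV]) fun x => ?_
    simp only [FAtom.subst_var, List.mem_append, List.mem_cons]
    grind
  exact .tail (.single ⟨_, by simp [goalRules], hrename⟩) ⟨_, by simp [goalRules], hgoal⟩

theorem isRewriting.mono {Rs Rs' : List ERule} (h : ∀ r ∈ Rs, r ∈ Rs') {Q Q' : List FAtom} :
    isRewriting Rs Q Q' → isRewriting Rs' Q Q' :=
  Relation.ReflTransGen.mono (fun _ _ ⟨r, hr, hd⟩ => ⟨r, h r hr, hd⟩) _ _

theorem isFUS.addGoal (h : isFUS Rs) (hfes : isFES Rs) (hRs : g ∉ rulesPreds Rs)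
    (hb : g ∉ atomsPreds b) : isFUS (goalRules b g ++ Rs) := by
  intro Q
  obtain ⟨k, hk⟩ := exists_vars_lt b
  obtain ⟨S, hS, hSQ⟩ := h Q
  by_cases hg : ⟨g, []⟩ ∈ Q
  · obtain ⟨S', hS', hSQ'⟩ :=
      h (b ++ (Q.filter (· ≠ ⟨g, []⟩)).map (FAtom.subst (shiftVar k)))
    refine ⟨S ++ S', fun Q' hQ' => ?_, fun F hF => ?_⟩
    · rcases List.mem_append.1 hQ' with hQ' | hQ'
      · exact (hS Q' hQ').mono (by simp +contextual)
      · exact ((isRewriting_goalRules hg k).mono (by simp +contextual)).trans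
          ((hS' Q' hQ').mono (by simp +contextual))
    · obtain ⟨I, -, hI⟩ := hfes F hF
      rw [entails_goalRules_append hI hRs hb hk, hSQ F hF, hSQ' F hF]
      simp only [List.mem_append, or_and_right, exists_or]
  · refine ⟨S, fun Q' hQ' => (hS Q' hQ').mono (by simp +contextual), fun F hF => ?_⟩
    obtain ⟨I, -, hI⟩ := hfes F hF
    have hfilter : Q.filter (· ≠ ⟨g, []⟩) = Q :=
      List.filter_eq_self.2 fun a ha => by simpa using ne_of_mem_of_not_mem ha hg
    rw [← hSQ F hF, entails_goalRules_append hI hRs hb hk, hfilter, or_iff_left_of_imp]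
    intro hQ
    rw [← hI.2.2, satCQ_append_shiftVar hk] at hQ
    exact (hI.2.2 Q).1 hQ.2

end Goal

/-! ### The one-round chase -/

instance (l : List FAtom) : DecidablePred (· ∈ atomsVars l) := fun _ =>
  decidable_of_iff _ (mem_flatMap_args (l := l))

instance (R : ERule) : DecidablePred (· ∈ R.exV) := fun v =>
  inferInstanceAs (Decidable (v ∈ atomsVars R.head ∧ v ∉ atomsVars R.body))

/-- The elements of a one-round chase: the constants and, for every assignment `τ` of constants
to the variables of a rule body, one null for each existential variable. -/
inductive ChaseTerm where
  | const : ℕ → ChaseTerm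
  | null : (ℕ → ℕ) → ℕ → ChaseTerm

/-- `τ` maps the body of `R` into `F`. The values of `τ` outside the body are normalised to `0`,
so that a fact base has only finitely many triggers. -/
def IsTrigger (R : ERule) (F : List FAtom) (τ : ℕ → ℕ) : Prop :=
  (∀ v ∉ atomsVars R.body, τ v = 0) ∧ ∀ b ∈ R.body, b.subst (groundSubst τ) ∈ F

/-- The instance of a term of `R` produced by firing `R` on the trigger `τ`. -/
def ERule.fire (R : ERule) (τ : ℕ → ℕ) : FTerm → ChaseTerm
  | .var v => if v ∈ atomsVars R.body then .const (τ v) else .null τ v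
  | .const n => .const n

/-- The facts of `F` together with the heads of `R` instantiated on all triggers in `F`. -/
abbrev chase (R : ERule) (F : List FAtom) : Interp where
  Dom := ChaseTerm
  inh := ⟨.const 0⟩
  rel p l := (∃ cs : List ℕ, l = cs.map .const ∧ ⟨p, cs.map .const⟩ ∈ F) ∨
    ∃ τ, IsTrigger R F τ ∧ ∃ a ∈ R.head, p = a.pred ∧ l = a.args.map (R.fire τ)
  cst := .const

/-- One round of rule applications saturates every fact base: the body of `R` has no matches in
the chase beyond the triggers. -/
def ERule.IsSaturatedInOneRound (R : ERule) : Prop :=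
  ∀ F, isFactBase F → ∀ ν : ℕ → ChaseTerm, (∀ a ∈ R.body, a.sat (chase R F) ν) →
    ∃ τ, IsTrigger R F τ ∧ ∀ v ∈ atomsVars R.body, ν v = .const (τ v)

section Chase

variable {R : ERule} {F : List FAtom}

theorem eval_chase_fire (τ : ℕ → ℕ) (t : FTerm) :
    t.eval (chase R F) (fun v => R.fire τ (.var v)) = R.fire τ t := by
  cases t <;> rfl

theorem satFacts_chase (hF : isFactBase F) : satFacts (chase R F) F := by
  intro ν a ha
  obtain ⟨cs, hcs⟩ := (hF a ha).exists_args_eq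
  rw [hcs] at ha ⊢
  exact .inl ⟨cs, by simp [Function.comp_def, FTerm.eval], ha⟩

theorem IsTrigger.sat_head {τ : ℕ → ℕ} (hτ : IsTrigger R F τ) {a : FAtom} (ha : a ∈ R.head) :
    a.sat (chase R F) fun v => R.fire τ (.var v) :=
  .inr ⟨τ, hτ, a, ha, rfl, List.map_congr_left fun t _ => eval_chase_fire τ t⟩

theorem ERule.IsSaturatedInOneRound.sat_chase (hR : R.IsSaturatedInOneRound)
    (hF : isFactBase F) : R.sat (chase R F) := by
  intro ν hν
  obtain ⟨τ, hτ, hντ⟩ := hR F hF ν hν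
  refine ⟨fun v => R.fire τ (.var v), fun v hv => ?_, fun a ha => hτ.sat_head ha⟩
  simp [hντ v hv, ERule.fire, hv]

theorem IsTrigger.exists_sat_head {τ : ℕ → ℕ} (hτ : IsTrigger R F τ) {M : Interp}
    (hM : satFacts M F) (hR : R.sat M) :
    ∃ ν : ℕ → M.Dom, (∀ v ∈ atomsVars R.body, ν v = M.cst (τ v)) ∧ ∀ a ∈ R.head, a.sat M ν :=
  hR (fun v => M.cst (τ v)) fun a ha =>
    FAtom.sat_subst.1 (hM (fun _ => M.inh.some) _ (hτ.2 a ha))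

theorem exists_isHom_chase {M : Interp} (hM : satFacts M F) (hR : R.sat M) :
    ∃ g, IsHom (chase R F) M g := by
  have hν (τ) : ∃ ν : ℕ → M.Dom, IsTrigger R F τ →
      (∀ v ∈ atomsVars R.body, ν v = M.cst (τ v)) ∧ ∀ a ∈ R.head, a.sat M ν := by
    by_cases hτ : IsTrigger R F τ
    · exact (hτ.exists_sat_head hM hR).imp fun _ h _ => h
    · exact ⟨fun _ => M.inh.some, fun h => absurd h hτ⟩
  choose ν hν using hν
  let g : ChaseTerm → M.Dom
    | .const n => M.cst n
    | .null τ v => ν τ v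
  refine ⟨g, fun _ => rfl, ?_⟩
  rintro p l (⟨cs, rfl, h⟩ | ⟨τ, hτ, a, ha, rfl, rfl⟩)
  · simpa [FAtom.sat, Function.comp_def, FTerm.eval] using hM (fun _ => M.inh.some) _ h
  · have hfire (t : FTerm) : g (R.fire τ t) = t.eval M (ν τ) := by
      cases t with
      | const n => rfl
      | var v =>
        by_cases hv : v ∈ atomsVars R.body
        · simp [ERule.fire, hv, g, FTerm.eval, (hν τ hτ).1 v hv]
        · simp [ERule.fire, hv, g, FTerm.eval]
    simpa [FAtom.sat, Function.comp_def, hfire] using (hν τ hτ).2 a ha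

theorem isUniversalModel_chase {Rs : List ERule} (hR : R.IsSaturatedInOneRound)
    (hRs : ∀ r ∈ Rs, ∀ a ∈ r.head, a ∈ r.body) (hF : isFactBase F) :
    isUniversalModel (chase R F) F (R :: Rs) := by
  refine isUniversalModel_of_isHom (satFacts_chase hF) ?_ fun M hM hMR =>
    exists_isHom_chase hM (hMR R (by simp))
  rw [List.forall_mem_cons]
  exact ⟨hR.sat_chase hF, fun r hr => ERule.sat_of_head_subset (hRs r hr)⟩

theorem IsTrigger.mem_atomsConsts {τ : ℕ → ℕ} (hτ : IsTrigger R F τ) {v : ℕ}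
    (hv : v ∈ atomsVars R.body) : τ v ∈ atomsConsts F := by
  obtain ⟨b, hb, hvb⟩ := hv
  exact ⟨_, hτ.2 b hb, List.mem_map.2 ⟨_, hvb, rfl⟩⟩

theorem finite_setOf_isTrigger (R : ERule) (F : List FAtom) : {τ | IsTrigger R F τ}.Finite := by
  have : Finite (atomsVars R.body) := finite_atomsVars _
  have : Finite (atomsConsts F) := finite_atomsConsts _
  refine (Set.finite_range fun (τ : atomsVars R.body → atomsConsts F) v =>
    if hv : v ∈ atomsVars R.body then (τ ⟨v, hv⟩ : ℕ) else 0).subset fun τ hτ => ?_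
  refine ⟨fun v => ⟨τ v, hτ.mem_atomsConsts v.2⟩, ?_⟩
  ext v
  by_cases hv : v ∈ atomsVars R.body
  · simp [hv]
  · simp [hv, hτ.1 v hv]

theorem finite_support_chase (R : ERule) (F : List FAtom) :
    {v | ∃ p l, (chase R F).rel p l ∧ v ∈ l}.Finite := by
  have hheads : (⋃ τ ∈ {τ | IsTrigger R F τ},
      R.fire τ '' {t | t ∈ R.head.flatMap FAtom.args}).Finite :=
    (finite_setOf_isTrigger R F).biUnion fun _ _ => (List.finite_toSet _).image _
  refine (((finite_atomsConsts F).image ChaseTerm.const).union hheads).subset ?_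
  rintro v ⟨p, l, ⟨cs, rfl, h⟩ | ⟨τ, hτ, a, ha, rfl, rfl⟩, hv⟩
  · obtain ⟨c, hc, rfl⟩ := List.mem_map.1 hv
    exact .inl ⟨c, ⟨_, h, List.mem_map_of_mem hc⟩, rfl⟩
  · obtain ⟨t, ht, rfl⟩ := List.mem_map.1 hv
    exact .inr (Set.mem_biUnion hτ ⟨t, List.mem_flatMap.2 ⟨a, ha, ht⟩, rfl⟩)

theorem ERule.IsSaturatedInOneRound.isFES {Rs : List ERule} (hR : R.IsSaturatedInOneRound)
    (hRs : ∀ r ∈ Rs, ∀ a ∈ r.head, a ∈ r.body) : isFES (R :: Rs) := by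
  intro F hF
  set D := {v | ∃ p l, (chase R F).rel p l ∧ v ∈ l}
  have : Finite D := finite_support_chase R F
  exact ⟨_, inferInstanceAs (Finite (Option D)),
    (isUniversalModel_chase hR hRs hF).collapse (D := D) hF fun p l h v hv => ⟨p, l, h, hv⟩⟩

theorem ERule.fire_eq_const_iff {τ : ℕ → ℕ} {v n : ℕ} :
    R.fire τ (.var v) = .const n ↔ v ∈ atomsVars R.body ∧ τ v = n := by
  by_cases hv : v ∈ atomsVars R.body <;> simp [ERule.fire, hv]

theorem mem_of_rel_chase_const (hR : ∀ a ∈ R.head, ∃ v ∈ R.exV, .var v ∈ a.args) {p : ℕ}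
    {cs : List ℕ} (h : (chase R F).rel p (cs.map .const)) : ⟨p, cs.map .const⟩ ∈ F := by
  obtain ⟨cs', hcs, h⟩ | ⟨τ, -, a, ha, rfl, hcs⟩ := h
  · rwa [List.map_injective_iff.2 (fun _ _ => ChaseTerm.const.inj) hcs]
  · obtain ⟨v, hv, hva⟩ := hR a ha
    obtain ⟨c, -, hc⟩ := List.mem_map.1 (hcs ▸ List.mem_map_of_mem hva)
    exact absurd (ERule.fire_eq_const_iff.1 hc.symm).1 hv.2

theorem ERule.isSaturatedInOneRound (hR : ∀ a ∈ R.head, ∃ v ∈ R.exV, .var v ∈ a.args)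
    (hbody : ∀ F, isFactBase F → ∀ ν : ℕ → ChaseTerm, (∀ a ∈ R.body, a.sat (chase R F) ν) →
      ∀ v ∈ atomsVars R.body, ∃ n, ν v = .const n) :
    R.IsSaturatedInOneRound := by
  intro F hF ν hν
  have hτ (v : ℕ) : ∃ n, (v ∉ atomsVars R.body → n = 0) ∧
      (v ∈ atomsVars R.body → ν v = .const n) := by
    by_cases hv : v ∈ atomsVars R.body
    · exact (hbody F hF ν hν v hv).imp fun n hn => ⟨fun h => absurd hv h, fun _ => hn⟩
    · exact ⟨0, fun _ => rfl, fun h => absurd h hv⟩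
  choose τ hτ₀ hτ using hτ
  refine ⟨τ, ⟨hτ₀, fun a ha => ?_⟩, hτ⟩
  rw [← sat_factInterp, FAtom.sat]
  have hargs : a.args.map (FTerm.eval (chase R F) ν) =
      (a.args.map (FTerm.eval (factInterp F) τ)).map ChaseTerm.const := by
    rw [List.map_map]
    refine List.map_congr_left fun t ht => ?_
    cases t with
    | const n => rfl
    | var v => exact hτ v ⟨a, ha, ht⟩
  refine mem_of_rel_chase_const (p := a.pred) hR ?_
  rw [← hargs]
  exact hν a ha

end Chase

/-! ### The simulation rule -/

namespace Encoding

/-- `i` is a node: a configuration, a stack, or a cell, that is, a stack split into its top symbol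
and the rest. The further predicates of the encoding are the instruction table `4`, the halting
states `5` and the goal `6`. -/
abbrev node (i : ℕ) : FAtom := ⟨0, [.var i]⟩
/-- `i` is a configuration with state `j`, or a cell with top symbol `j`. -/
abbrev label (i j : ℕ) : FAtom := ⟨1, [.var i, .var j]⟩
/-- `j` is the first stack of the configuration `i`, or the stack that the cell `i` splits. -/
abbrev sEdge (i j : ℕ) : FAtom := ⟨2, [.var i, .var j]⟩
/-- `j` is the second stack of the configuration `i`, or the rest of the cell `i`. -/
abbrev tEdge (i j : ℕ) : FAtom := ⟨3, [.var i, .var j]⟩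

/-- The body of the simulation rule: a configuration `0` with state `1` and stacks `2` and `3`, a
cell `4` splitting the first stack into the symbol `5` and the rest `6`, and the row of the
instruction table for `1` and `5`, with the symbol `7` to push onto the second stack and the states
`8` and `9` to enter without and with exchanging the stacks. The atoms at `10` describe a dump that
the existential variables of the head may be sent to. -/
def stepBody : List FAtom :=
  [node 0, label 0 1, sEdge 0 2, tEdge 0 3, node 4, label 4 5, sEdge 4 2, tEdge 4 6,
    node 2, node 3, node 6, ⟨4, [.var 1, .var 5, .var 7, .var 8, .var 9, .var 10]⟩,
    label 10 7, label 10 8, label 10 9, tEdge 10 3, sEdge 10 6, tEdge 10 6,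
    sEdge 10 10, tEdge 10 10, label 10 10]

/-- The head of the simulation rule: the pushed stack `14`, its cell `11`, and the next
configurations `12` and `13`. The variables `15` and `16` are not nodes, so that edges into `14`
arise by transitivity only and one round of rule applications without transitivity creates no new
match of the body. The atoms at `17` and `18` let every edge or label between two variables of a
query be rewritten. -/
def stepHead : List FAtom :=
  [node 11, node 12, node 13, node 14, label 11 7, label 12 8, label 13 9,
    tEdge 11 3, sEdge 12 6, tEdge 13 6, sEdge 11 15, sEdge 13 15, sEdge 10 15, sEdge 15 14,
    tEdge 12 16, tEdge 10 16, tEdge 16 14,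
    sEdge 17 17, sEdge 17 18, tEdge 17 17, tEdge 17 18, label 17 17, label 17 18]

/-- The existential rule simulating the steps of two-stack machines. -/
def stepRule : ERule := ⟨stepBody, stepHead⟩

theorem exists_eq_var_of_mem_stepBody :
    ∀ a ∈ stepBody, ∀ t ∈ a.args, ∃ j < 11, t = .var j := by decide

theorem exists_eq_var_of_mem_stepHead :
    ∀ a ∈ stepHead, ∀ t ∈ a.args, ∃ j < 19, t = .var j := by decide

theorem mem_atomsVars_stepBody {v : ℕ} : v ∈ atomsVars stepBody ↔ v < 11 := by
  constructor
  · rintro ⟨a, ha, hv⟩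
    obtain ⟨j, hj, hvj⟩ := exists_eq_var_of_mem_stepBody a ha _ hv
    cases hvj
    exact hj
  · have h : ∀ v < 11, ∃ a ∈ stepBody, .var v ∈ a.args := by decide
    exact h v

theorem mem_exV_stepRule {v : ℕ} (hv : v ∈ stepRule.exV) : 11 ≤ v :=
  not_lt.1 fun h => hv.2 (mem_atomsVars_stepBody.2 h)

theorem exists_exV_of_mem_stepHead : ∀ a ∈ stepRule.head, ∃ v ∈ stepRule.exV, .var v ∈ a.args := by
  have h : ∀ a ∈ stepHead, ∃ v < 19, 11 ≤ v ∧ .var v ∈ a.args := by decide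
  intro a ha
  obtain ⟨v, -, hv, hva⟩ := h a ha
  exact ⟨v, ⟨⟨a, ha, hva⟩, fun hb => hv.not_gt (mem_atomsVars_stepBody.1 hb)⟩, hva⟩

theorem stepRule_fire_of_lt {τ : ℕ → ℕ} {v : ℕ} (hv : v < 11) :
    stepRule.fire τ (.var v) = .const (τ v) := if_pos (mem_atomsVars_stepBody.2 hv)

theorem stepRule_fire_of_le {τ : ℕ → ℕ} {v : ℕ} (hv : 11 ≤ v) :
    stepRule.fire τ (.var v) = .null τ v :=
  if_neg fun h => hv.not_gt (mem_atomsVars_stepBody.1 h)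

section Saturation

variable {F : List FAtom}

theorem eq_const_or_null_of_node {v : ChaseTerm} (h : (chase stepRule F).rel 0 [v]) :
    (∃ n, v = .const n) ∨ ∃ τ, ∃ z < 15, v = .null τ z := by
  obtain ⟨cs, hcs, -⟩ | ⟨τ, -, a, ha, ha₀, hl⟩ := h
  · obtain ⟨n, -, hn⟩ := List.mem_map.1 (hcs ▸ List.mem_singleton_self v)
    exact .inl ⟨n, hn.symm⟩
  · have hhead : ∀ a ∈ stepHead, 0 = a.pred → ∃ z < 15, 11 ≤ z ∧ a.args = [.var z] := by decide
    obtain ⟨z, hz, hz', hargs⟩ := hhead a ha ha₀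
    rw [hargs] at hl
    exact .inr ⟨τ, z, hz, (List.singleton_inj.1 hl).trans (stepRule_fire_of_le hz')⟩

theorem stepRule_fire_not_node {τ : ℕ → ℕ} {z : ℕ} (hz : 15 ≤ z) :
    ¬(chase stepRule F).rel 0 [stepRule.fire τ (.var z)] := by
  rw [stepRule_fire_of_le (by lia)]
  intro h
  obtain ⟨n, ⟨⟩⟩ | ⟨τ', z', hz', h⟩ := eq_const_or_null_of_node h
  cases h
  lia

theorem exists_const_of_edge {p : ℕ} (zs : List ℕ)
    (hp : ∀ a ∈ stepHead, p = a.pred → ∃ i < 19, ∃ j < 19, a.args = [.var i, .var j] ∧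
      (i ∈ zs ∧ 11 ≤ i ∨ 15 ≤ i ∨ 15 ≤ j))
    {v w : ChaseTerm} (h : (chase stepRule F).rel p [v, w])
    (hv : (chase stepRule F).rel 0 [v]) (hw : (chase stepRule F).rel 0 [w]) :
    ((∃ n, v = .const n) ∧ ∃ n, w = .const n) ∨ ∃ τ, ∃ z ∈ zs, v = .null τ z := by
  obtain ⟨cs, hcs, -⟩ | ⟨τ, -, a, ha, ha₀, hl⟩ := h
  · have hc : ∀ u ∈ [v, w], ∃ n, u = .const n := by
      rw [hcs]
      intro u hu
      obtain ⟨n, -, hn⟩ := List.mem_map.1 hu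
      exact ⟨n, hn.symm⟩
    exact .inl ⟨hc v (by simp), hc w (by simp)⟩
  · obtain ⟨i, -, j, -, hargs, hij⟩ := hp a ha ha₀
    rw [hargs] at hl
    obtain ⟨rfl, rfl⟩ : v = stepRule.fire τ (.var i) ∧ w = stepRule.fire τ (.var j) := by
      simpa using hl
    obtain ⟨hi, hi'⟩ | hi | hj := hij
    · exact .inr ⟨τ, i, hi, stepRule_fire_of_le hi'⟩
    · exact absurd hv (stepRule_fire_not_node hi)
    · exact absurd hw (stepRule_fire_not_node hj)

/-- The nulls with an `S`-edge to a node differ from those with a `T`-edge to a node, so a node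
with both is a constant. -/
theorem exists_const_of_sEdge_tEdge {f x y : ChaseTerm} (hf : (chase stepRule F).rel 0 [f])
    (hx : (chase stepRule F).rel 0 [x]) (hy : (chase stepRule F).rel 0 [y])
    (hS : (chase stepRule F).rel 2 [f, x]) (hT : (chase stepRule F).rel 3 [f, y]) :
    (∃ n, f = .const n) ∧ (∃ n, x = .const n) ∧ ∃ n, y = .const n := by
  obtain ⟨hf', hx'⟩ | ⟨τ, z, hz, hfz⟩ := exists_const_of_edge [12] (by decide) hS hf hx <;>
    obtain ⟨hf', hy'⟩ | ⟨τ', z', hz', hfz'⟩ := exists_const_of_edge [11, 13] (by decide) hT hf hy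
  · exact ⟨hf', hx', hy'⟩
  · obtain ⟨n, rfl⟩ := hf'
    cases hfz'
  · obtain ⟨n, rfl⟩ := hf'
    cases hfz
  · subst hfz
    cases hfz'
    obtain rfl := List.mem_singleton.1 hz
    simp at hz'

theorem exists_const_of_table {l : List ChaseTerm} (h : (chase stepRule F).rel 4 l) :
    ∀ v ∈ l, ∃ n, v = .const n := by
  obtain ⟨cs, rfl, -⟩ | ⟨τ, -, a, ha, ha₀, -⟩ := h
  · simp
  · have hhead : ∀ a ∈ stepHead, 4 ≠ a.pred := by decide
    exact absurd ha₀ (hhead a ha)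

theorem stepRule_isSaturatedInOneRound : stepRule.IsSaturatedInOneRound := by
  refine ERule.isSaturatedInOneRound exists_exV_of_mem_stepHead fun F _ ν hν => ?_
  have hnode (i : ℕ) (hi : node i ∈ stepBody) : (chase stepRule F).rel 0 [ν i] := hν _ hi
  have hS (i j : ℕ) (hi : sEdge i j ∈ stepBody) : (chase stepRule F).rel 2 [ν i, ν j] := hν _ hi
  have hT (i j : ℕ) (hi : tEdge i j ∈ stepBody) : (chase stepRule F).rel 3 [ν i, ν j] := hν _ hi
  have hD : (chase stepRule F).rel 4 [ν 1, ν 5, ν 7, ν 8, ν 9, ν 10] :=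
    hν ⟨4, [.var 1, .var 5, .var 7, .var 8, .var 9, .var 10]⟩ (by decide)
  have hD' := exists_const_of_table hD
  obtain ⟨h0, h2, h3⟩ := exists_const_of_sEdge_tEdge (hnode 0 (by decide)) (hnode 2 (by decide))
    (hnode 3 (by decide)) (hS 0 2 (by decide)) (hT 0 3 (by decide))
  obtain ⟨h4, -, h6⟩ := exists_const_of_sEdge_tEdge (hnode 4 (by decide)) (hnode 2 (by decide))
    (hnode 6 (by decide)) (hS 4 2 (by decide)) (hT 4 6 (by decide))
  intro v hv
  have hv' := mem_atomsVars_stepBody.1 hv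
  interval_cases v
  all_goals first | assumption | exact hD' _ (by simp)

end Saturation

end Encoding

/-! ### Rewriting the simulation rule -/

theorem isFUS_of_finite_sound_rewritings {Rs : List ERule}
    (h : ∀ Q, ∃ S : Set (List FAtom), S.Finite ∧ ∀ F, isFactBase F → entails F Rs Q →
      ∃ Q' ∈ S, isRewriting Rs Q Q' ∧ (∀ F, entails F [] Q' → entails F Rs Q) ∧ entails F [] Q') :
    isFUS Rs := by
  intro Q
  obtain ⟨S, hS, hSQ⟩ := h Q
  have hfin : (S ∩ {Q' | isRewriting Rs Q Q' ∧ ∀ F, entails F [] Q' → entails F Rs Q}).Finite :=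
    hS.inter_of_left _
  refine ⟨hfin.toFinset.toList, by simp +contextual, fun F hF => ⟨fun hQ => ?_, ?_⟩⟩
  · obtain ⟨Q', hQ', hrw, hsound, hent⟩ := hSQ F hF hQ
    exact ⟨Q', by simpa using ⟨hQ', hrw, hsound⟩, hent⟩
  · rintro ⟨Q', hQ', hent⟩
    simp only [Finset.mem_toList, Set.Finite.mem_toFinset] at hQ'
    exact hQ'.2.2 F hent

theorem finite_setOf_list_length_le {α : Type*} {s : Set α} (hs : s.Finite) (n : ℕ) :
    {l : List α | l.length ≤ n ∧ ∀ x ∈ l, x ∈ s}.Finite := by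
  have := hs.to_subtype
  refine ((List.finite_length_le s n).image (List.map (↑))).subset ?_
  rintro l ⟨hn, hl⟩
  lift l to List s using hl
  exact ⟨l, by simpa using hn, rfl⟩

theorem finite_setOf_subst {T : Set FTerm} (hT : T.Finite) (l : List FAtom) :
    {x | ∃ a ∈ l, ∃ σ : ℕ → FTerm, (∀ v, σ v ∈ T) ∧ x = a.subst σ}.Finite := by
  obtain ⟨k, hk⟩ := exists_vars_lt l
  have := hT.to_subtype
  refine (l.finite_toSet.biUnion fun a _ => Set.finite_range fun f : Fin k → T =>
    a.subst fun v => if hv : v < k then f ⟨v, hv⟩ else .var v).subset ?_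
  rintro _ ⟨a, ha, σ, hσ, rfl⟩
  refine Set.mem_biUnion ha ⟨fun v => ⟨σ v, hσ v⟩, FAtom.subst_congr fun v hv => ?_⟩
  simp [hk v ⟨a, ha, hv⟩]

namespace Encoding

/-- The tautology `node 19 ∧ B → node 19`. Rewriting with it substitutes into a query and adds an
instance of `B` to it. -/
def nodeRule (B : List FAtom) : ERule := ⟨node 19 :: B, [node 19]⟩

/-- The simulation rule with two tautologies. A query and a rule sharing a variable are rewritten
without renaming it apart, so the tautologies serve to rename variables of a query. -/
def stepRules : List ERule := [stepRule, nodeRule [], nodeRule stepBody]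

theorem head_subset_body_of_mem_nodeRules :
    ∀ r ∈ [nodeRule [], nodeRule stepBody], ∀ a ∈ r.head, a ∈ r.body := by simp [nodeRule]

theorem isUniversalModel_chase_stepRules {F : List FAtom} (hF : isFactBase F) :
    isUniversalModel (chase stepRule F) F stepRules :=
  isUniversalModel_chase stepRule_isSaturatedInOneRound head_subset_body_of_mem_nodeRules hF

theorem isFES_stepRules : isFES stepRules :=
  stepRule_isSaturatedInOneRound.isFES head_subset_body_of_mem_nodeRules

theorem directRewriting_nodeRule {K K' B : List FAtom} {t : FTerm} (ht : ⟨0, [t]⟩ ∈ K)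
    {σ : ℕ → FTerm} (hσ : σ 19 = t.subst σ)
    (hK' : ∀ x, x ∈ K' ↔ x ∈ K.map (FAtom.subst σ) ∨ x ∈ B.map (FAtom.subst σ)) :
    directRewriting K K' (nodeRule B) := by
  have hex : (nodeRule B).exV = ∅ := by
    refine Set.eq_empty_of_forall_notMem fun v hv => hv.2 ?_
    obtain ⟨a, ha, hva⟩ := hv.1
    exact ⟨a, List.mem_cons.2 (.inl (List.mem_singleton.1 ha)), hva⟩
  have hnode : FAtom.subst σ ⟨0, [t]⟩ = (node 19).subst σ := by
    rw [FAtom.subst, FAtom.subst, List.map_singleton, List.map_singleton, ← hσ]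
    rfl
  refine directRewriting_of_subst_eq ht (List.mem_singleton_self (node 19)) σ hnode
    (by simp [hex]) fun x => ?_
  simp only [hK', List.mem_map, nodeRule, List.mem_cons]
  grind

section Renaming

variable {K : List FAtom} {t : FTerm} (hK : ∀ v ∈ atomsVars K, 20 ≤ v) (ht : ⟨0, [t]⟩ ∈ K)
include hK ht

theorem isRewriting_subst {K' : List FAtom} (σ : ℕ → FTerm)
    (hK' : ∀ x, x ∈ K' ↔ x ∈ K.map (FAtom.subst σ)) : isRewriting stepRules K K' := by
  have hcongr : ∀ a ∈ K, a.subst σ = a.subst (Function.update σ 19 (t.subst σ)) := by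
    refine fun a ha => FAtom.subst_congr fun v hv => (Function.update_of_ne ?_ _ _).symm
    have := hK v ⟨a, ha, hv⟩
    lia
  have ht' : t.subst σ = t.subst (Function.update σ 19 (t.subst σ)) := by
    simpa [FAtom.subst] using hcongr _ ht
  refine .single ⟨nodeRule [], by simp [stepRules], directRewriting_nodeRule ht
    (σ := Function.update σ 19 (t.subst σ)) (by rw [Function.update_self, ← ht']) fun x => ?_⟩
  rw [hK', List.map_congr_left hcongr]
  simp

theorem isRewriting_append_stepBody {κ : ℕ → FTerm} :
    isRewriting stepRules K (K ++ stepBody.map (FAtom.subst κ)) := by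
  set σ : ℕ → FTerm := fun v => if v < 11 then κ v else if v = 19 then t else .var v with hσ
  have hKσ : ∀ a ∈ K, a.subst σ = a := by
    refine fun a ha => (FAtom.subst_congr fun v hv => ?_).trans a.subst_var
    have := hK v ⟨a, ha, hv⟩
    simp only [hσ]
    grind
  have hbody : ∀ b ∈ stepBody, b.subst σ = b.subst κ := fun b hb => FAtom.subst_congr fun v hv =>
    if_pos (mem_atomsVars_stepBody.1 ⟨b, hb, hv⟩)
  have ht' : t.subst σ = t := by simpa [FAtom.subst] using hKσ _ ht
  refine .single ⟨nodeRule stepBody, by simp [stepRules], directRewriting_nodeRule ht (σ := σ)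
    (ht'.symm ▸ rfl) fun x => ?_⟩
  rw [List.map_congr_left hbody, List.map_congr_left hKσ, List.map_id', List.mem_append]

end Renaming

/-- Up to a renaming of variables, `q` is an atom of the head of `stepRule` with constants
substituted for the universal variables. -/
def IsErasable (κ : ℕ → FTerm) (q : FAtom) : Prop :=
  ∃ h ∈ stepHead, ∃ e : Equiv.Perm ℕ, (∀ v, 20 ≤ v → 11 ≤ e v) ∧
    (∀ v < 11, .var v ∈ h.args → ∃ c, κ v = .const c) ∧
    q.subst (fun v => .var (e v)) = h.subst fun v => if v < 11 then κ v else .var v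

/-- The unifier of an atom, renamed by `e`, with a head atom whose universal variables take the
values given by `κ`. -/
def eraseUnifier (κ : ℕ → FTerm) (e : Equiv.Perm ℕ) (v : ℕ) : FTerm :=
  if v < 11 then κ v else .var (e.symm v)

section EraseUnifier

variable {κ : ℕ → FTerm} {e : Equiv.Perm ℕ} {h : FAtom}

theorem subst_eraseUnifier_of_rename {a : FAtom} (ha : ∀ v, .var v ∈ a.args → 11 ≤ e v) :
    (a.subst fun v => .var (e v)).subst (eraseUnifier κ e) = a := by
  rw [FAtom.subst_subst]
  refine (FAtom.subst_congr fun v hv => ?_).trans a.subst_var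
  simp [FTerm.subst, eraseUnifier, (ha v hv).not_gt]

theorem subst_eraseUnifier_of_mem_stepBody {b : FAtom} (hb : b ∈ stepBody) :
    b.subst (eraseUnifier κ e) = b.subst κ :=
  FAtom.subst_congr fun _ hv => if_pos (mem_atomsVars_stepBody.1 ⟨b, hb, hv⟩)

theorem subst_eraseUnifier_ite (hκ : ∀ v < 11, .var v ∈ h.args → ∃ c, κ v = .const c) {v : ℕ}
    (hv : .var v ∈ h.args) :
    FTerm.subst (eraseUnifier κ e) (if v < 11 then κ v else .var v) = eraseUnifier κ e v := by
  by_cases hv' : v < 11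
  · obtain ⟨c, hc⟩ := hκ v hv' hv
    simp [eraseUnifier, hv', hc, FTerm.subst]
  · simp [hv', FTerm.subst]

theorem eq_of_eraseUnifier_eq (hκ : ∀ v < 11, .var v ∈ h.args → ∃ c, κ v = .const c) {v z : ℕ}
    (hv : .var v ∈ h.args) (hz : 11 ≤ z) (hvz : eraseUnifier κ e v = eraseUnifier κ e z) :
    v = z := by
  by_cases hv' : v < 11
  · obtain ⟨c, hc⟩ := hκ v hv' hv
    simp [eraseUnifier, hv', hc, hz.not_gt] at hvz
  · simpa [eraseUnifier, hv', hz.not_gt] using hvz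

end EraseUnifier

theorem directRewriting_erase {κ : ℕ → FTerm} {h q : FAtom} (hh : h ∈ stepHead) {e : Equiv.Perm ℕ}
    {K K' : List FAtom} (he : ∀ v ∈ atomsVars K, 11 ≤ e v) (hq : q ∈ K)
    (hκ : ∀ v < 11, .var v ∈ h.args → ∃ c, κ v = .const c)
    (hqh : q.subst (fun v => .var (e v)) = h.subst fun v => if v < 11 then κ v else .var v)
    (hbody : ∀ b ∈ stepBody, b.subst κ ∈ K') (hK' : ∀ x, x ∈ K' ↔ x ∈ K ∧ x ≠ q) :
    directRewriting (K.map (FAtom.subst fun v => .var (e v))) K' stepRule := by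
  have hKσ : ∀ a ∈ K, (a.subst fun v => .var (e v)).subst (eraseUnifier κ e) = a := fun a ha =>
    subst_eraseUnifier_of_rename fun v hv => he v ⟨a, ha, hv⟩
  refine directRewriting_of_subst_eq (List.mem_map_of_mem hq) hh (eraseUnifier κ e) ?_ ?_
    fun x => ?_
  · rw [hqh, FAtom.subst_subst]
    exact FAtom.subst_congr fun _ => subst_eraseUnifier_ite hκ
  · rw [hqh]
    rintro z hz t (ht | ht) htz
    · obtain ⟨u, hu, rfl⟩ := List.mem_map.1 ht
      obtain ⟨v, -, rfl⟩ := exists_eq_var_of_mem_stepHead h hh u hu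
      obtain rfl := eq_of_eraseUnifier_eq hκ hu (mem_exV_stepRule hz)
        ((subst_eraseUnifier_ite hκ hu).symm.trans htz)
      exact if_neg (mem_exV_stepRule hz).not_gt
    · obtain ⟨v, -, rfl⟩ := exists_eq_var_of_mem_stepHead h hh t ht
      rw [eq_of_eraseUnifier_eq hκ ht (mem_exV_stepRule hz) htz]
  · constructor
    · intro hx
      obtain ⟨hxK, hxq⟩ := (hK' x).1 hx
      refine .inl ⟨_, List.mem_map_of_mem hxK, fun h => hxq ?_, (hKσ x hxK).symm⟩
      rw [← hKσ x hxK, h, hKσ q hq]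
    · rintro (⟨c, hc, hcq, rfl⟩ | ⟨b, hb, rfl⟩)
      · obtain ⟨a, ha, rfl⟩ := List.mem_map.1 hc
        rw [hKσ a ha]
        exact (hK' a).2 ⟨ha, fun h => hcq (h ▸ rfl)⟩
      · rw [subst_eraseUnifier_of_mem_stepBody hb]
        exact hbody b hb

theorem isRewriting_erase {κ : ℕ → FTerm} {q : FAtom} {K K' : List FAtom}
    (hq : IsErasable κ q) (hK : ∀ v ∈ atomsVars K, 20 ≤ v) (hqK : q ∈ K)
    (hbody : ∀ b ∈ stepBody, b.subst κ ∈ K') (hK' : ∀ x, x ∈ K' ↔ x ∈ K ∧ x ≠ q) :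
    isRewriting stepRules K K' := by
  obtain ⟨h, hh, e, he, hκ, hqh⟩ := hq
  have hnode : ⟨0, [κ 0]⟩ ∈ K := ((hK' _).1 (hbody (node 0) (by decide))).1
  refine (isRewriting_subst hK hnode (fun v => .var (e v)) fun _ => Iff.rfl).tail
    ⟨stepRule, by simp [stepRules], ?_⟩
  exact directRewriting_erase hh (fun v hv => he v (hK v hv)) hqK hκ hqh hbody hK'

theorem isRewriting_erase_all (K : List FAtom) {L : List FAtom}
    (hL : ∀ q ∈ L, ∃ κ, IsErasable κ q ∧ ∀ b ∈ stepBody, b.subst κ ∈ K)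
    (hLK : ∀ v ∈ atomsVars (L ++ K), 20 ≤ v) : isRewriting stepRules (L ++ K) K := by
  induction L with
  | nil => exact .refl
  | cons q L ih =>
    have hLK' : ∀ v ∈ atomsVars (L ++ K), 20 ≤ v := fun v ⟨a, ha, hv⟩ =>
      hLK v ⟨a, List.mem_cons_of_mem q ha, hv⟩
    refine .trans ?_ (ih (fun q hq => hL q (List.mem_cons_of_mem _ hq)) hLK')
    obtain ⟨κ, hκ, hbody⟩ := hL q (List.mem_cons_self ..)
    have hbody' : ∀ b ∈ stepBody, b.subst κ ∈ L ++ K := fun b hb =>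
      List.mem_append_right L (hbody b hb)
    by_cases hq : q ∈ L ++ K
    · have hnode : ⟨0, [κ 0]⟩ ∈ q :: L ++ K := List.mem_cons_of_mem q (hbody' (node 0) (by decide))
      refine isRewriting_subst hLK hnode .var fun x => ?_
      simp only [List.mem_map, FAtom.subst_var, exists_eq_right, List.cons_append, List.mem_cons]
      exact ⟨.inr, fun h => h.elim (fun h => h ▸ hq) id⟩
    · refine isRewriting_erase hκ hLK (List.mem_cons_self ..) hbody' fun x => ?_
      rw [List.cons_append, List.mem_cons]
      grind

section Target

variable {Q F : List FAtom} {ν : ℕ → ChaseTerm} {τ : FAtom → ℕ → ℕ}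

/-- The retraction of a chase with `stepRule` onto the constants that sends the nulls of a trigger
to its value at the dump variable. -/
def retract : ChaseTerm → ℕ
  | .const n => n
  | .null τ _ => τ 10

theorem retract_stepRule_fire (τ : ℕ → ℕ) (v : ℕ) :
    retract (stepRule.fire τ (.var v)) = τ (if v < 11 then v else 10) := by
  by_cases hv : v < 11
  · simp [stepRule_fire_of_lt hv, hv, retract]
  · simp [stepRule_fire_of_le (not_lt.1 hv), hv, retract]

theorem map_retract_eval (ν : ℕ → ChaseTerm) (l : List FTerm) :
    ((l.map (FTerm.eval (chase stepRule F) ν)).map fun v => FTerm.const (retract v)) =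
      l.map (FTerm.subst (groundSubst fun v => retract (ν v))) := by
  rw [List.map_map]
  exact List.map_congr_left fun t _ => by cases t <;> rfl

/-- The dump makes every head atom other than a node fold into the body. -/
theorem mem_of_isTrigger_of_mem_stepHead {τ : ℕ → ℕ} (hτ : IsTrigger stepRule F τ) {a h : FAtom}
    (hh : h ∈ stepHead) (h₀ : h.pred ≠ 0) (hpred : a.pred = h.pred)
    (hargs : a.args.map (FTerm.eval (chase stepRule F) ν) = h.args.map (stepRule.fire τ)) :
    a.subst (groundSubst fun v => retract (ν v)) ∈ F := by
  have hfold : ∀ h ∈ stepHead, h.pred ≠ 0 →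
      h.subst (fun v => .var (if v < 11 then v else 10)) ∈ stepBody := by decide
  convert hτ.2 _ (hfold h hh h₀) using 1
  rw [FAtom.subst_subst, FAtom.subst, ← map_retract_eval (F := F), hargs, hpred, FAtom.subst,
    List.map_map]
  congr 1
  refine List.map_congr_left fun t ht => ?_
  obtain ⟨v, -, rfl⟩ := exists_eq_var_of_mem_stepHead h hh t ht
  simp [retract_stepRule_fire, FTerm.subst]

/-- All variables of `a` are sent to constants. -/
def IsConstAtom (ν : ℕ → ChaseTerm) (a : FAtom) : Prop :=
  ∀ v, .var v ∈ a.args → ∃ n, ν v = .const n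

/-- `a` is sent to a head atom instantiated by the trigger `τ`. -/
def IsHeadAtom (F : List FAtom) (ν : ℕ → ChaseTerm) (τ : ℕ → ℕ) (a : FAtom) : Prop :=
  ∃ h ∈ stepHead, a.pred = h.pred ∧
    a.args.map (FTerm.eval (chase stepRule F) ν) = h.args.map (stepRule.fire τ)

theorem subst_mem_or_isHeadAtom {a : FAtom} (ha : a.sat (chase stepRule F) ν) :
    (IsConstAtom ν a ∧ a.subst (groundSubst fun v => retract (ν v)) ∈ F) ∨
      ∃ τ, IsTrigger stepRule F τ ∧ IsHeadAtom F ν τ a := by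
  obtain ⟨cs, hcs, h⟩ | ⟨τ, hτ, h, hh, hpred, hargs⟩ := ha
  · refine .inl ⟨fun v hv => ?_, ?_⟩
    · obtain ⟨n, -, hn⟩ := List.mem_map.1 (hcs ▸ List.mem_map_of_mem hv)
      exact ⟨n, hn.symm⟩
    · rwa [FAtom.subst, ← map_retract_eval (F := F), hcs, List.map_map]
  · exact .inr ⟨τ, hτ, h, hh, hpred, hargs⟩

theorem IsHeadAtom.not_isConstAtom {τ : ℕ → ℕ} {a : FAtom} (h : IsHeadAtom F ν τ a) :
    ¬IsConstAtom ν a := by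
  obtain ⟨h, hh, -, hargs⟩ := h
  intro ha
  obtain ⟨z, hz, hzh⟩ := exists_exV_of_mem_stepHead h hh
  obtain ⟨t, ht, htz⟩ := List.mem_map.1 (hargs ▸ List.mem_map_of_mem hzh)
  rw [stepRule_fire_of_le (mem_exV_stepRule hz)] at htz
  cases t with
  | const n => cases htz
  | var v =>
    obtain ⟨n, hn⟩ := ha v ht
    cases hn.symm.trans htz

theorem exists_null_node_or_entails (hF : isFactBase F)
    (hν : ∀ a ∈ Q, a.sat (chase stepRule F) ν) :
    (∃ w, node w ∈ Q ∧ ∃ τ, IsTrigger stepRule F τ ∧ ∀ n, ν w ≠ .const n) ∨ entails F [] Q := by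
  rw [or_iff_not_imp_left, entails_nil_iff hF]
  refine fun hnode => ⟨fun v => retract (ν v), fun a ha => ?_⟩
  obtain ⟨-, h⟩ | ⟨τ, hτ, h, hh, hpred, hargs⟩ := subst_mem_or_isHeadAtom (hν a ha)
  · exact h
  · refine mem_of_isTrigger_of_mem_stepHead hτ hh (fun h₀ => hnode ?_) hpred hargs
    have hhead : ∀ h ∈ stepHead, h.pred = 0 → ∃ z < 15, 11 ≤ z ∧ h = node z := by decide
    obtain ⟨z, -, hz, rfl⟩ := hhead h hh h₀
    obtain ⟨p, ts⟩ := a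
    obtain rfl : p = 0 := hpred
    obtain ⟨t, rfl⟩ : ∃ t, ts = [t] :=
      List.length_eq_one_iff.1 (by simpa using congrArg List.length hargs)
    have ht : t.eval (chase stepRule F) ν = .null τ z := by
      simpa [stepRule_fire_of_le hz] using hargs
    cases t with
    | const n => cases ht
    | var w => exact ⟨w, ha, τ, hτ, fun n hn => by cases hn.symm.trans ht⟩

open Classical in
/-- A query matched into the chase by `ν` is rewritten into its atoms sent to constants and one
copy of the body for each trigger, where `N` names the constants. -/
noncomputable def target (Q : List FAtom) (ν : ℕ → ChaseTerm) (τ : FAtom → ℕ → ℕ) (N : ℕ → FTerm) :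
    List FAtom :=
  (Q.filter (IsConstAtom ν)).map (FAtom.subst fun v => N (retract (ν v))) ++
    Q.flatMap fun a => stepBody.map (FAtom.subst fun v => N (τ a v))

theorem mem_target {N : ℕ → FTerm} {x : FAtom} :
    x ∈ target Q ν τ N ↔
      (∃ a ∈ Q, IsConstAtom ν a ∧ x = a.subst fun v => N (retract (ν v))) ∨
      ∃ a ∈ Q, ∃ b ∈ stepBody, x = b.subst fun v => N (τ a v) := by
  simp [target, and_assoc, eq_comm]

theorem exists_sat_stepHead {M : Interp} (hM : stepRule.sat M) (μ : ℕ → M.Dom) (κ : ℕ → FTerm) :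
    ∃ ρ : ℕ → M.Dom, (∀ b ∈ stepBody, (b.subst κ).sat M μ) →
      (∀ v < 11, ρ v = (κ v).eval M μ) ∧ ∀ h ∈ stepHead, h.sat M ρ := by
  by_cases hbody : ∀ b ∈ stepBody, (b.subst κ).sat M μ
  · obtain ⟨ρ, hρ, hhead⟩ := hM (fun v => (κ v).eval M μ) fun b hb => FAtom.sat_subst.1 (hbody b hb)
    exact ⟨ρ, fun _ => ⟨fun v hv => hρ v (mem_atomsVars_stepBody.2 hv), hhead⟩⟩
  · exact ⟨μ, fun h => absurd h hbody⟩

theorem entails_of_entails_target {N : ℕ → FTerm} (hN : ∀ c ∈ atomsConsts Q, N c = .const c)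
    (hQ : ∀ a ∈ Q, IsConstAtom ν a ∨ IsHeadAtom F ν (τ a) a) {F' : List FAtom}
    (h : entails F' [] (target Q ν τ N)) : entails F' stepRules Q := by
  intro M hF' hM
  obtain ⟨μ, hμ⟩ := h M hF' (by simp)
  choose ρ hρ using fun τ : ℕ → ℕ =>
    exists_sat_stepHead (hM stepRule (by simp [stepRules])) μ fun v => N (τ v)
  let g : ChaseTerm → M.Dom
    | .const n => (N n).eval M μ
    | .null τ z => ρ τ z
  refine ⟨fun v => g (ν v), fun a ha => ?_⟩
  obtain h | ⟨h, hh, hpred, hargs⟩ := hQ a ha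
  · have := FAtom.sat_subst.1 (hμ _ (mem_target.2 (.inl ⟨a, ha, h, rfl⟩)))
    refine (FAtom.sat_congr fun v hv => ?_).1 this
    obtain ⟨n, hn⟩ := h v hv
    simp [hn, retract, g]
  · obtain ⟨hρ', hhead⟩ := hρ (τ a) fun b hb => hμ _ (mem_target.2 (.inr ⟨a, ha, b, hb, rfl⟩))
    have heval : ∀ t ∈ a.args, t.eval M (fun v => g (ν v)) = g (t.eval (chase stepRule F) ν) := by
      rintro (v | c) ht
      · rfl
      · simp [FTerm.eval, g, hN c ⟨a, ha, ht⟩]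
    have hfire : ∀ t ∈ h.args, g (stepRule.fire (τ a) t) = t.eval M (ρ (τ a)) := by
      intro t ht
      obtain ⟨v, -, rfl⟩ := exists_eq_var_of_mem_stepHead h hh t ht
      by_cases hv : v < 11
      · simp [stepRule_fire_of_lt hv, g, FTerm.eval, hρ' v hv]
      · simp [stepRule_fire_of_le (not_lt.1 hv), g, FTerm.eval]
    have hmap : a.args.map (FTerm.eval M fun v => g (ν v)) = h.args.map (FTerm.eval M (ρ (τ a))) :=
      calc _ = (a.args.map (FTerm.eval (chase stepRule F) ν)).map g := by
            rw [List.map_map]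
            exact List.map_congr_left heval
        _ = _ := by
            rw [hargs, List.map_map]
            exact List.map_congr_left hfire
    rw [FAtom.sat, hmap, hpred]
    exact hhead h hh

theorem entails_target (hF : isFactBase F) {N : ℕ → FTerm} {δ : ℕ → ℕ}
    (hQ : ∀ a ∈ Q, IsConstAtom ν a → a.subst (groundSubst fun v => retract (ν v)) ∈ F)
    (hτ : ∀ a ∈ Q, IsTrigger stepRule F (τ a))
    (hν : ∀ v ∈ atomsVars Q, (N (retract (ν v))).subst (groundSubst δ) = .const (retract (ν v)))
    (hN : ∀ a ∈ Q, ∀ v < 11, (N (τ a v)).subst (groundSubst δ) = .const (τ a v)) :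
    entails F [] (target Q ν τ N) := by
  refine (entails_nil_iff hF).2 ⟨δ, fun x hx => ?_⟩
  obtain ⟨a, ha, hconst, rfl⟩ | ⟨a, ha, b, hb, rfl⟩ := mem_target.1 hx
  · rw [FAtom.subst_subst, FAtom.subst_congr fun v hv => hν v ⟨a, ha, hv⟩]
    exact hQ a ha hconst
  · rw [FAtom.subst_subst,
      FAtom.subst_congr fun v hv => hN a ha v (mem_atomsVars_stepBody.1 ⟨b, hb, hv⟩)]
    exact (hτ a ha).2 b hb

end Target

section Erasure

variable {F : List FAtom} {ν : ℕ → ChaseTerm} {τ : ℕ → ℕ} {κ : ℕ → FTerm} {p x y : ℕ}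

theorem le_swap {z v : ℕ} (hz : 11 ≤ z) (hv : 11 ≤ v) (hx : 11 ≤ x) : 11 ≤ Equiv.swap x z v := by
  rw [Equiv.swap_apply_def]
  split_ifs <;> assumption

theorem isErasable_node (hx : 20 ≤ x) : IsErasable κ (node x) :=
  ⟨node 11, by decide, Equiv.swap x 11, fun v hv => le_swap (by lia) (by lia) (by lia),
    by grind, by simp [FAtom.subst, FTerm.subst]⟩

theorem isErasable_var_var (hp : ∀ j ∈ [17, 18], ⟨p, [.var 17, .var j]⟩ ∈ stepHead) (hx : 20 ≤ x)
    (hy : 20 ≤ y) : IsErasable κ ⟨p, [.var x, .var y]⟩ := by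
  by_cases hxy : x = y
  · subst hxy
    exact ⟨_, hp 17 (by simp), Equiv.swap x 17, fun v hv => le_swap (by lia) (by lia) (by lia),
      by grind, by simp [FAtom.subst, FTerm.subst]⟩
  · refine ⟨_, hp 18 (by simp), Equiv.swap x 17 * Equiv.swap y 18, fun v hv =>
      le_swap (by lia) (le_swap (by lia) (by lia) (by lia)) (by lia), by grind, ?_⟩
    have hx' : Equiv.swap y 18 x = x := Equiv.swap_apply_of_ne_of_ne hxy (by lia)
    have hy' : Equiv.swap x 17 18 = 18 := Equiv.swap_apply_of_ne_of_ne (by lia) (by lia)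
    simp [FAtom.subst, FTerm.subst, hx', hy']

theorem isErasable_const_var {i z c : ℕ} (h : ⟨p, [.var i, .var z]⟩ ∈ stepHead) (hi : i < 11)
    (hz : 11 ≤ z) (hc : κ i = .const c) (hy : 20 ≤ y) :
    IsErasable κ ⟨p, [.const c, .var y]⟩ :=
  ⟨_, h, Equiv.swap y z, fun v hv => le_swap hz (by lia) (by lia), by grind,
    by simp [FAtom.subst, FTerm.subst, hi, hc, hz.not_gt]⟩

theorem isErasable_var_const {i z c : ℕ} (h : ⟨p, [.var z, .var i]⟩ ∈ stepHead) (hi : i < 11)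
    (hz : 11 ≤ z) (hc : κ i = .const c) (hx : 20 ≤ x) :
    IsErasable κ ⟨p, [.var x, .const c]⟩ :=
  ⟨_, h, Equiv.swap x z, fun v hv => le_swap hz (by lia) (by lia), by grind,
    by simp [FAtom.subst, FTerm.subst, hi, hc, hz.not_gt]⟩

theorem mem_stepHead_cases : ∀ h ∈ stepHead, (∃ z < 19, 11 ≤ z ∧ h = node z) ∨
    ∃ p < 4, ∃ i < 19, ∃ j < 19, h = ⟨p, [.var i, .var j]⟩ ∧
      ∀ j ∈ [17, 18], ⟨p, [.var 17, .var j]⟩ ∈ stepHead := by decide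

theorem eq_of_stepRule_fire_eq_const {v c : ℕ} (h : stepRule.fire τ (.var v) = .const c) :
    v < 11 ∧ τ v = c :=
  (ERule.fire_eq_const_iff.1 h).imp_left mem_atomsVars_stepBody.1

theorem IsHeadAtom.isErasable {a : FAtom} (ha : IsHeadAtom F ν τ a) {N : ℕ → FTerm}
    (hN : ∀ c, .const c ∈ a.args → N c = .const c) {ρ : ℕ → ℕ} (hρ : ∀ x, 20 ≤ ρ x) :
    IsErasable (fun v => N (τ v)) (a.subst fun x => .var (ρ x)) := by
  have hconst := ha.not_isConstAtom
  obtain ⟨h, hh, hpred, hargs⟩ := ha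
  have hlen := congrArg List.length hargs
  rw [List.length_map, List.length_map] at hlen
  obtain ⟨p, ts⟩ := a
  obtain rfl : p = h.pred := hpred
  obtain ⟨z, -, -, rfl⟩ | ⟨p, -, i, -, j, -, rfl, hp⟩ := mem_stepHead_cases h hh
  · obtain ⟨t, rfl⟩ := List.length_eq_one_iff.1 hlen
    cases t with
    | const c => simp [IsConstAtom] at hconst
    | var x => exact isErasable_node (hρ x)
  · obtain ⟨t, u, rfl⟩ := List.length_eq_two.1 hlen
    obtain ⟨ht, hu⟩ : t.eval (chase stepRule F) ν = stepRule.fire τ (.var i) ∧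
        u.eval (chase stepRule F) ν = stepRule.fire τ (.var j) := by simpa using hargs
    rcases t with x | c <;> rcases u with y | d
    · exact isErasable_var_var hp (hρ x) (hρ y)
    · obtain ⟨hj, hjd⟩ := eq_of_stepRule_fire_eq_const hu.symm
      have hi : 11 ≤ i := not_lt.1 fun hi => hconst fun v hv => by
        obtain rfl : v = x := by simpa using hv
        exact ⟨_, ht.trans (stepRule_fire_of_lt hi)⟩
      exact isErasable_var_const hh hj hi (by rw [hjd, hN d (by simp)]) (hρ x)
    · obtain ⟨hi, hic⟩ := eq_of_stepRule_fire_eq_const ht.symm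
      have hj : 11 ≤ j := not_lt.1 fun hj => hconst fun v hv => by
        obtain rfl : v = y := by simpa using hv
        exact ⟨_, hu.trans (stepRule_fire_of_lt hj)⟩
      exact isErasable_const_var hh hi hj (by rw [hic, hN c (by simp)]) (hρ y)
    · simp [IsConstAtom] at hconst

end Erasure

section Rewriting

theorem exists_subst_eq_var {l : List FAtom} {σ : ℕ → FTerm} {v : ℕ}
    (hv : v ∈ atomsVars (l.map (FAtom.subst σ))) : ∃ u ∈ atomsVars l, σ u = .var v := by
  obtain ⟨_, hx, hv⟩ := hv
  obtain ⟨a, ha, rfl⟩ := List.mem_map.1 hx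
  obtain ⟨u | c, ht, hu⟩ := List.mem_map.1 hv
  · exact ⟨u, ⟨a, ha, ht⟩, hu⟩
  · cases hu

theorem le_of_mem_atomsVars_append {l l' : List FAtom} {n : ℕ} (hl : ∀ v ∈ atomsVars l, n ≤ v)
    (hl' : ∀ v ∈ atomsVars l', n ≤ v) : ∀ v ∈ atomsVars (l ++ l'), n ≤ v := by
  rintro v ⟨a, ha, hv⟩
  rcases List.mem_append.1 ha with ha | ha
  · exact hl v ⟨a, ha, hv⟩
  · exact hl' v ⟨a, ha, hv⟩

theorem le_of_mem_atomsVars_bodies {α : Type*} {κ : α → ℕ → FTerm} {n : ℕ} {L : List α}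
    (hκ : ∀ x ∈ L, ∀ v u, κ x v = .var u → n ≤ u) :
    ∀ v ∈ atomsVars (L.flatMap fun x => stepBody.map (FAtom.subst (κ x))), n ≤ v := by
  rintro v ⟨a, ha, hv⟩
  obtain ⟨x, hx, ha⟩ := List.mem_flatMap.1 ha
  obtain ⟨u, -, hu⟩ := exists_subst_eq_var ⟨a, ha, hv⟩
  exact hκ x hx u v hu

theorem isRewriting_append_bodies {α : Type*} {κ : α → ℕ → FTerm} {L : List α}
    (hκ : ∀ x ∈ L, ∀ v u, κ x v = .var u → 20 ≤ u) {K : List FAtom}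
    (hK : ∀ v ∈ atomsVars K, 20 ≤ v) {t : FTerm} (ht : ⟨0, [t]⟩ ∈ K) :
    isRewriting stepRules K (K ++ L.flatMap fun x => stepBody.map (FAtom.subst (κ x))) := by
  induction L generalizing K with
  | nil => simpa using .refl
  | cons x L ih =>
    rw [List.flatMap_cons, ← List.append_assoc]
    refine (isRewriting_append_stepBody hK ht).trans (ih
      (fun x hx => hκ x (List.mem_cons_of_mem _ hx)) ?_ (List.mem_append_left _ ht))
    refine le_of_mem_atomsVars_append hK fun v hv => ?_
    obtain ⟨u, -, hu⟩ := exists_subst_eq_var hv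
    exact hκ x (List.mem_cons_self ..) u v hu

variable {Q F : List FAtom} {ν : ℕ → ChaseTerm} {τ : FAtom → ℕ → ℕ} {N : ℕ → FTerm} {k w : ℕ}

/-- The effect on variables of rewriting a query that contains `node w` with `nodeRule []`,
followed by a shift that renames the query apart from the rules. -/
def mergeShift (w x : ℕ) : ℕ := (if x = 19 then w else x) + 20

/-- The substitution that undoes `mergeShift w` on variables sent to constants, and names the
latter. -/
def unmerge (ν : ℕ → ChaseTerm) (N : ℕ → FTerm) (k w j : ℕ) : FTerm :=
  if j < k then N (retract (ν (if j = w + 20 then 19 else j - 20))) else .var j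

theorem isRewriting_mergeShift (hw : node w ∈ Q) {K : List FAtom}
    (hK : ∀ x, x ∈ K ↔ x ∈ Q.map (FAtom.subst fun x => .var (mergeShift w x))) :
    isRewriting stepRules Q K :=
  .single ⟨nodeRule [], by simp [stepRules],
    directRewriting_nodeRule (σ := fun x => .var (mergeShift w x)) hw
      (by simp [mergeShift, FTerm.subst]) (by simp [hK])⟩

theorem subst_mergeShift_unmerge (hw : ∀ n, ν w ≠ .const n) (hwk : w + 20 < k)
    {a : FAtom} (ha : IsConstAtom ν a) (hk : ∀ v, .var v ∈ a.args → v + 20 < k) :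
    (a.subst fun x => .var (mergeShift w x)).subst (unmerge ν N k w) =
      a.subst fun v => N (retract (ν v)) := by
  rw [FAtom.subst_subst]
  refine FAtom.subst_congr fun v hv => ?_
  have hvw : v ≠ w := fun h => have ⟨n, hn⟩ := ha v hv; hw n (h ▸ hn)
  have := hk v hv
  by_cases h : v = 19
  · simp [FTerm.subst, unmerge, mergeShift, h, hwk]
  · simp [FTerm.subst, unmerge, mergeShift, h, hvw, this]

theorem map_unmerge_bodies (hN : ∀ c u, N c = .var u → k ≤ u) :
    (Q.flatMap fun a => stepBody.map (FAtom.subst fun v => N (τ a v))).map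
      (FAtom.subst (unmerge ν N k w)) =
    Q.flatMap fun a => stepBody.map (FAtom.subst fun v => N (τ a v)) := by
  rw [List.map_flatMap]
  congr! 2 with a
  rw [List.map_map]
  refine List.map_congr_left fun b _ => ?_
  rw [Function.comp_apply, FAtom.subst_subst]
  refine FAtom.subst_congr fun v _ => ?_
  cases h : N (τ a v) with
  | const c => rfl
  | var u => simp [FTerm.subst, unmerge, (hN _ u h).not_gt]

open Classical in
theorem map_unmerge_eq_target (hNk : ∀ c u, N c = .var u → k ≤ u)
    (hk : ∀ v ∈ atomsVars Q, v + 20 < k) (hwQ : node w ∈ Q) (hw : ∀ n, ν w ≠ .const n) :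
    ((Q.filter (IsConstAtom ν)).map (FAtom.subst fun x => .var (mergeShift w x)) ++
      Q.flatMap fun a => stepBody.map (FAtom.subst fun v => N (τ a v))).map
        (FAtom.subst (unmerge ν N k w)) = target Q ν τ N := by
  rw [List.map_append, map_unmerge_bodies hNk, List.map_map, target]
  congr 1
  refine List.map_congr_left fun a ha => ?_
  obtain ⟨ha, hconst⟩ := List.mem_filter.1 ha
  exact subst_mergeShift_unmerge hw (hk w ⟨_, hwQ, by simp⟩) (of_decide_eq_true hconst)
    fun v hv => hk v ⟨a, ha, hv⟩

open Classical in
theorem isRewriting_target (hN : ∀ c ∈ atomsConsts Q, N c = .const c)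
    (hNk : ∀ c u, N c = .var u → k ≤ u) (hk : ∀ v ∈ atomsVars Q, v + 20 < k)
    (hQ : ∀ a ∈ Q, IsConstAtom ν a ∨ IsHeadAtom F ν (τ a) a) (hwQ : node w ∈ Q)
    (hw : ∀ n, ν w ≠ .const n) : isRewriting stepRules Q (target Q ν τ N) := by
  set s := FAtom.subst fun x => .var (mergeShift w x)
  set B := Q.flatMap fun a => stepBody.map (FAtom.subst fun v => N (τ a v)) with hB
  have hs20 (l : List FAtom) : ∀ v ∈ atomsVars (l.map s), 20 ≤ v := by
    intro v hv
    obtain ⟨u, -, hu⟩ := exists_subst_eq_var hv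
    exact FTerm.var.inj hu ▸ Nat.le_add_left ..
  have hN20 : ∀ c u, N c = .var u → 20 ≤ u := fun c u h => by
    have := hNk c u h
    have := hk w ⟨_, hwQ, by simp⟩
    lia
  have hB20 : ∀ v ∈ atomsVars B, 20 ≤ v := le_of_mem_atomsVars_bodies fun a _ v u => hN20 (τ a v) u
  have hbody : ∀ a ∈ Q, ∀ b ∈ stepBody, (b.subst fun v => N (τ a v)) ∈ B := fun a ha b hb =>
    List.mem_flatMap.2 ⟨a, ha, List.mem_map_of_mem hb⟩
  set C := (Q.filter (IsConstAtom ν)).map s with hC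
  set L := (Q.filter (!IsConstAtom ν ·)).map s with hL
  have hrename : isRewriting stepRules Q (L ++ C) := isRewriting_mergeShift hwQ fun x => by
    rw [hL, hC, ← List.map_append]
    exact ((List.perm_append_comm.trans (List.filter_append_perm _ _)).map _).mem_iff
  have hbodies : isRewriting stepRules (L ++ C) (L ++ (C ++ B)) := by
    rw [← List.append_assoc]
    refine isRewriting_append_bodies (fun a _ v u => hN20 (τ a v) u)
      (le_of_mem_atomsVars_append (hs20 _) (hs20 _)) (t := .var (mergeShift w w)) ?_
    refine List.mem_append_left _ (List.mem_map.2 ⟨node w, ?_, rfl⟩)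
    simp [hwQ, IsConstAtom, hw]
  have herase : isRewriting stepRules (L ++ (C ++ B)) (C ++ B) := by
    refine isRewriting_erase_all _ (fun q hq => ?_) (le_of_mem_atomsVars_append (hs20 _)
      (le_of_mem_atomsVars_append (hs20 _) hB20))
    obtain ⟨a, ha, rfl⟩ := List.mem_map.1 hq
    obtain ⟨ha, hconst⟩ := List.mem_filter.1 ha
    have hhead := (hQ a ha).resolve_left (by simpa using hconst)
    exact ⟨_, hhead.isErasable (fun c hc => hN c ⟨a, ha, hc⟩) (fun x => Nat.le_add_left ..),
      fun b hb => List.mem_append_right _ (hbody a ha b hb)⟩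
  refine ((hrename.trans hbodies).trans herase).trans (isRewriting_subst
    (le_of_mem_atomsVars_append (hs20 _) hB20) (t := N (τ (node w) 0))
    (List.mem_append_right _ (hbody _ hwQ (node 0) (by decide))) (unmerge ν N k w) fun x => ?_)
  rw [hB, map_unmerge_eq_target hNk hk hwQ hw]

open Classical in
/-- The term naming the constant `c` in a rewriting of `Q`: itself when it occurs in `Q`, and
otherwise a variable that depends on the position of `c` in the list `C`. -/
noncomputable def constName (Q : List FAtom) (k : ℕ) (C : List ℕ) (c : ℕ) : FTerm :=
  if c ∈ atomsConsts Q then .const c else .var (k + C.idxOf c)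

theorem constName_subst_eq {C : List ℕ} {c : ℕ} (hc : c ∈ C) :
    (constName Q k C c).subst (groundSubst fun v => C.getD (v - k) 0) = .const c := by
  unfold constName
  split_ifs
  · rfl
  · have h := List.idxOf_lt_length_of_mem hc
    simp [FTerm.subst, h]

theorem le_of_constName_eq_var {C : List ℕ} {c u : ℕ} (h : constName Q k C c = .var u) : k ≤ u := by
  unfold constName at h
  split_ifs at h
  cases h
  exact Nat.le_add_right ..

theorem constName_mem (C : List ℕ) (c : ℕ) :
    constName Q k C c ∈ FTerm.const '' atomsConsts Q ∪ FTerm.var '' Set.Iic (k + C.length) := by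
  unfold constName
  split_ifs with hc
  · exact .inl ⟨c, hc, rfl⟩
  · exact .inr ⟨_, Nat.add_le_add_left List.idxOf_le_length k, rfl⟩

theorem length_target_le : (target Q ν τ N).length ≤ 22 * Q.length := by
  classical
  have h := List.length_filter_le (fun a => decide (IsConstAtom ν a)) Q
  rw [target, List.length_append, List.length_map, List.length_flatMap]
  simp only [List.length_map, List.map_const', List.sum_replicate, smul_eq_mul]
  have : stepBody.length = 21 := rfl
  lia

theorem exists_subst_of_mem_target {x : FAtom} (hx : x ∈ target Q ν τ N) :
    ∃ a ∈ Q ++ stepBody, ∃ f : ℕ → ℕ, x = a.subst fun v => N (f v) := by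
  obtain ⟨a, ha, -, rfl⟩ | ⟨a, -, b, hb, rfl⟩ := mem_target.1 hx
  · exact ⟨a, List.mem_append_left _ ha, _, rfl⟩
  · exact ⟨b, List.mem_append_right _ hb, _, rfl⟩

end Rewriting

theorem exists_target_of_entails {Q F : List FAtom} (hF : isFactBase F)
    (h : entails F stepRules Q) : entails F [] Q ∨
      ∃ (ν : ℕ → ChaseTerm) (τ : FAtom → ℕ → ℕ) (w : ℕ), node w ∈ Q ∧ (∀ n, ν w ≠ .const n) ∧
        ∀ a ∈ Q, IsTrigger stepRule F (τ a) ∧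
        (IsConstAtom ν a ∧ a.subst (groundSubst fun v => retract (ν v)) ∈ F ∨
          IsHeadAtom F ν (τ a) a) := by
  obtain ⟨ν, hν⟩ := ((isUniversalModel_chase_stepRules hF).2.2 Q).2 h
  refine (exists_null_node_or_entails hF hν).symm.imp_right ?_
  rintro ⟨w, hwQ, τ₀, hτ₀, hw⟩
  have hτ (a : FAtom) : ∃ τ, a ∈ Q → IsTrigger stepRule F τ ∧
      (IsConstAtom ν a ∧ a.subst (groundSubst fun v => retract (ν v)) ∈ F ∨
        IsHeadAtom F ν τ a) := by
    by_cases ha : a ∈ Q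
    · obtain h | ⟨τ, hτ, h⟩ := subst_mem_or_isHeadAtom (hν a ha)
      exacts [⟨τ₀, fun _ => ⟨hτ₀, .inl h⟩⟩, ⟨τ, fun _ => ⟨hτ, .inr h⟩⟩]
    · exact ⟨τ₀, fun h => absurd h ha⟩
  choose τ hτ using hτ
  exact ⟨ν, τ, w, hwQ, hw, hτ⟩

theorem isFUS_stepRules : isFUS stepRules := by
  refine isFUS_of_finite_sound_rewritings fun Q => ?_
  obtain ⟨k, hk⟩ := exists_vars_lt Q
  replace hk : ∀ v ∈ atomsVars Q, v + 20 < k + 20 := fun v hv => Nat.add_lt_add_right (hk v hv) 20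
  set m := (Q.map fun a => a.args.length + 11).sum
  set T := FTerm.const '' atomsConsts Q ∪ FTerm.var '' Set.Iic (k + 20 + m)
  have hT : T.Finite := ((finite_atomsConsts Q).image _).union ((Set.finite_Iic _).image _)
  refine ⟨insert Q {Q' | Q'.length ≤ 22 * Q.length ∧ ∀ x ∈ Q', x ∈ {x | ∃ a ∈ Q ++ stepBody,
    ∃ σ : ℕ → FTerm, (∀ v, σ v ∈ T) ∧ x = a.subst σ}},
    (finite_setOf_list_length_le (finite_setOf_subst hT _) _).insert Q, fun F hF hQ => ?_⟩
  obtain h | ⟨ν, τ, w, hwQ, hw, hτ⟩ := exists_target_of_entails hF hQ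
  · exact ⟨Q, .inl rfl, .refl, fun F' h' M hM _ => h' M hM (by simp), h⟩
  let C := Q.flatMap fun a =>
    a.args.map (fun t => retract (t.eval (chase stepRule F) ν)) ++ (List.range 11).map (τ a)
  have hC : C.length = m := by simp [C, m, List.length_flatMap]
  have hQ' : ∀ a ∈ Q, IsConstAtom ν a ∨ IsHeadAtom F ν (τ a) a := fun a ha =>
    (hτ a ha).2.imp_left And.left
  have hN : ∀ c ∈ atomsConsts Q, constName Q (k + 20) C c = .const c := fun c hc => if_pos hc
  refine ⟨target Q ν τ (constName Q (k + 20) C), .inr ⟨length_target_le, fun x hx => ?_⟩,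
    isRewriting_target hN (fun c u => le_of_constName_eq_var) hk hQ' hwQ hw,
    fun F' => entails_of_entails_target hN hQ', ?_⟩
  · obtain ⟨a, ha, f, rfl⟩ := exists_subst_of_mem_target hx
    exact ⟨a, ha, _, fun v => by simpa only [T, hC] using constName_mem C (f v), rfl⟩
  · refine entails_target hF (fun a ha hconst => ?_) (fun a ha => (hτ a ha).1)
      (fun v ⟨a, ha, hv⟩ => ?_) (fun a ha v hv => ?_) (δ := fun v => C.getD (v - (k + 20)) 0)
    · exact (hτ a ha).2.elim And.right fun h => absurd hconst h.not_isConstAtom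
    · refine constName_subst_eq (List.mem_flatMap.2 ⟨a, ha, List.mem_append_left _ ?_⟩)
      exact List.mem_map.2 ⟨_, hv, rfl⟩
    · refine constName_subst_eq (List.mem_flatMap.2 ⟨a, ha, List.mem_append_right _ ?_⟩)
      exact List.mem_map_of_mem (List.mem_range.2 hv)

end Encoding

/-! ### Encoding two-stack machines -/

namespace Encoding

open Turing

/-- An instruction of a nondeterministic machine with two stacks: in state `state` with `read` on
top of the first stack, pop `read`, push `write` onto the second stack, and then either enter state
`keep`, or exchange the two stacks and enter state `swap`. -/
structure Instr (σ Γ : Type) where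
  state : σ
  read : Γ
  write : Γ
  keep : σ
  swap : σ

variable {σ Γ : Type} [Inhabited Γ]

/-- The configurations reachable by the two-stack machine with program `P` from state `q₀` with
first stack `w` and empty second stack. Stacks are infinite lists ending in blanks. -/
inductive Reachable (P : List (Instr σ Γ)) (q₀ : σ) (w : List Γ) :
    σ → ListBlank Γ → ListBlank Γ → Prop
  | init : Reachable P q₀ w q₀ (.mk w) default
  | keep {i : Instr σ Γ} {X Y : ListBlank Γ} (hi : i ∈ P)
      (h : Reachable P q₀ w i.state (X.cons i.read) Y) :
      Reachable P q₀ w i.keep X (Y.cons i.write)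
  | swap {i : Instr σ Γ} {X Y : ListBlank Γ} (hi : i ∈ P)
      (h : Reachable P q₀ w i.state (X.cons i.read) Y) :
      Reachable P q₀ w i.swap (Y.cons i.write) X

theorem cons_mk_drop (w : List Γ) (j : ℕ) :
    (ListBlank.mk (w.drop (min (j + 1) w.length))).cons (w.getI j) = .mk (w.drop j) := by
  obtain hj | hj := lt_or_ge j w.length
  · rw [min_eq_left hj, List.getI_eq_getElem w hj, ListBlank.cons_mk,
      ← List.drop_eq_getElem_cons hj]
  · rw [List.getI_eq_default w hj, List.drop_eq_nil_of_le hj, min_eq_right (by lia),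
      List.drop_length]
    exact ListBlank.cons_head_tail (.mk [])

theorem listBlank_cons_inj {a b : Γ} {X Y : ListBlank Γ} (h : X.cons a = Y.cons b) :
    a = b ∧ X = Y :=
  ⟨by simpa using congrArg ListBlank.head h, by simpa using congrArg ListBlank.tail h⟩

section Facts

variable [Encodable σ] [Encodable Γ]

/-- The constants are coded as pairs of a tag, here that of the dump, and an index. -/
def dumpConst : ℕ := Nat.pair 0 0

/-- The constant for the input stack without its top `j` symbols. -/
def stackConst (j : ℕ) : ℕ := Nat.pair 1 j

/-- The constant for the cell of `stackConst j`. -/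
def cellConst (j : ℕ) : ℕ := Nat.pair 2 j

/-- The constant for the initial configuration. -/
def startConst : ℕ := Nat.pair 3 0

/-- The constant for the stack symbol `a`. -/
def symbolConst (a : Γ) : ℕ := Nat.pair 4 (Encodable.encode a)

/-- The constant for the machine state `q`. -/
def stateConst (q : σ) : ℕ := Nat.pair 5 (Encodable.encode q)

/-- The ground atom with predicate `p` and constants `cs`. -/
def fact (p : ℕ) (cs : List ℕ) : FAtom := ⟨p, cs.map .const⟩

/-- The facts making `stackConst j` represent the stack `w.drop j`. -/
def inputFacts (w : List Γ) (j : ℕ) : List FAtom :=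
  [fact 0 [stackConst j], fact 0 [cellConst j], fact 1 [cellConst j, symbolConst (w.getI j)],
    fact 2 [cellConst j, stackConst j], fact 3 [cellConst j, stackConst (min (j + 1) w.length)],
    fact 2 [dumpConst, stackConst j], fact 3 [dumpConst, stackConst j]]

/-- The facts describing the initial configuration `startConst`, the halting state, and the loops
at `dumpConst`; `n` is the length of the input. -/
def controlFacts (q₀ qh : σ) (n : ℕ) : List FAtom :=
  [fact 2 [dumpConst, dumpConst], fact 3 [dumpConst, dumpConst], fact 1 [dumpConst, dumpConst],
    fact 0 [startConst], fact 1 [startConst, stateConst q₀], fact 2 [startConst, stackConst 0],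
    fact 3 [startConst, stackConst n], fact 5 [stateConst qh]]

/-- The row of the instruction table for `i`, together with the labels it needs at `dumpConst`. -/
def instrFacts (i : Instr σ Γ) : List FAtom :=
  [fact 4 [stateConst i.state, symbolConst i.read, symbolConst i.write, stateConst i.keep,
      stateConst i.swap, dumpConst],
    fact 1 [dumpConst, symbolConst i.write], fact 1 [dumpConst, stateConst i.keep],
    fact 1 [dumpConst, stateConst i.swap]]

/-- The fact base encoding the program `P`, its initial and halting states and its input. -/
def machineFacts (P : List (Instr σ Γ)) (q₀ qh : σ) (w : List Γ) : List FAtom :=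
  (List.range (w.length + 1)).flatMap (inputFacts w) ++
    (controlFacts q₀ qh w.length ++ P.flatMap instrFacts)

theorem isGround_fact (p : ℕ) (cs : List ℕ) : (fact p cs).isGround := by
  intro t ht
  obtain ⟨c, -, rfl⟩ := List.mem_map.1 ht
  exact ⟨c, rfl⟩

theorem sat_fact {I : Interp} {ν : ℕ → I.Dom} {p : ℕ} {cs : List ℕ} :
    (fact p cs).sat I ν ↔ I.rel p (cs.map I.cst) := by
  simp only [FAtom.sat, fact, List.map_map]
  rfl

theorem isFactBase_machineFacts (P : List (Instr σ Γ)) (q₀ qh : σ) (w : List Γ) :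
    isFactBase (machineFacts P q₀ qh w) := by
  have h : ∀ a ∈ machineFacts P q₀ qh w, ∃ p cs, a = fact p cs := by
    intro a ha
    simp only [machineFacts, inputFacts, controlFacts, instrFacts, List.mem_append,
      List.mem_flatMap, List.mem_cons, List.not_mem_nil, or_false] at ha
    grind
  intro a ha
  obtain ⟨p, cs, rfl⟩ := h a ha
  exact isGround_fact p cs

end Facts

/-- The query that detects a halting configuration. -/
def goalBody : List FAtom :=
  [node 0, label 0 1, sEdge 0 2, tEdge 0 3, node 2, node 3, ⟨5, [.var 1]⟩]

/-- The transitivity rules for the two kinds of edges. -/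
def edgeTransRules : List ERule := [transRule 2, transRule 3]

theorem transRule_sat_iff {I : Interp} {p : ℕ} : (transRule p).sat I ↔
    ∀ x y z, I.rel p [x, y] → I.rel p [y, z] → I.rel p [x, z] := by
  constructor
  · intro h x y z hxy hyz
    obtain ⟨ν, hν, hhead⟩ := h (fun n => if n = 0 then x else if n = 1 then y else z)
      (by simp [transRule, FAtom.sat, FTerm.eval, hxy, hyz])
    have h₀ : ν 0 = x := hν 0 ⟨_, List.mem_cons_self, by simp⟩
    have h₂ : ν 2 = z := hν 2 ⟨_, List.mem_cons_of_mem _ List.mem_cons_self, by simp⟩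
    simpa [transRule, FAtom.sat, FTerm.eval, h₀, h₂] using hhead
  · intro h ν hν
    refine ⟨ν, fun _ _ => rfl, ?_⟩
    simp only [transRule, List.mem_cons, List.not_mem_nil, or_false, forall_eq_or_imp,
      forall_eq] at hν ⊢
    exact h _ _ _ hν.1 hν.2

section Soundness

/-- The domain of the intended model: nodes for stacks, for nonempty stacks split into a top symbol
and a rest, and for configurations; labels for symbols and states; and a dump element. -/
inductive Element (σ Γ : Type) [Inhabited Γ] where
  | dump : Element σ Γ
  | stack : ListBlank Γ → Element σ Γ
  | cell : Γ → ListBlank Γ → Element σ Γ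
  | config : σ → ListBlank Γ → ListBlank Γ → Element σ Γ
  | symbol : Γ → Element σ Γ
  | state : σ → Element σ Γ

namespace Element

/-- The stack whose node an element points to by an `S`-edge. -/
def firstStack : Element σ Γ → Option (ListBlank Γ)
  | stack X => some X
  | cell a X => some (X.cons a)
  | config _ X _ => some X
  | _ => none

/-- The stack whose node an element points to by a `T`-edge. -/
def secondStack : Element σ Γ → Option (ListBlank Γ)
  | stack X => some X
  | cell _ X => some X
  | config _ _ Y => some Y
  | _ => none

/-- The edge relation of the intended model that sends `d` to the node of the stack `f d`, except
that the dump element points to itself and to every stack. -/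
def PointsTo (f : Element σ Γ → Option (ListBlank Γ)) (d e : Element σ Γ) : Prop :=
  d = dump ∧ e = dump ∨ ∃ X, e = stack X ∧ (d = dump ∨ f d = some X)

/-- The label relation of the intended model. -/
def HasLabel : Element σ Γ → Element σ Γ → Prop
  | dump, _ => True
  | cell a _, e => e = symbol a
  | config q _ _, e => e = state q
  | _, _ => False

theorem PointsTo.trans {f : Element σ Γ → Option (ListBlank Γ)} (hf : ∀ X, f (stack X) = some X)
    {c d e : Element σ Γ} (hcd : PointsTo f c d) (hde : PointsTo f d e) : PointsTo f c e := by
  obtain ⟨rfl, rfl⟩ | ⟨X, rfl, hX⟩ := hcd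
  · exact hde
  · obtain ⟨⟨⟩, -⟩ | ⟨Y, rfl, ⟨⟨⟩⟩ | hY⟩ := hde
    cases (hf X).symm.trans hY
    exact .inr ⟨X, rfl, hX⟩

end Element

open Element

variable (P : List (Instr σ Γ)) (q₀ qh : σ) (w : List Γ)

/-- The node predicate of the intended model; it holds for reachable configurations only. -/
def IsNode : Element σ Γ → Prop
  | stack _ => True
  | cell _ _ => True
  | config q X Y => Reachable P q₀ w q X Y
  | _ => False

variable {P q₀ w} in
theorem eq_config_of_hasLabel {d : Element σ Γ} {q : σ} (hd : IsNode P q₀ w d)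
    (h : HasLabel d (state q)) : ∃ X Y, d = config q X Y ∧ Reachable P q₀ w q X Y := by
  cases d <;> simp_all [IsNode, HasLabel]

variable {P q₀ w} in
theorem eq_cell_of_hasLabel {d : Element σ Γ} {a : Γ} (hd : IsNode P q₀ w d)
    (h : HasLabel d (symbol a)) : ∃ X, d = cell a X := by
  cases d <;> simp_all [IsNode, HasLabel]

/-- The predicates of the intended model, numbered as in `node` to `tEdge`. -/
def modelRel : ℕ → List (Element σ Γ) → Prop
  | 0, [d] => IsNode P q₀ w d
  | 1, [d, e] => HasLabel d e
  | 2, [d, e] => PointsTo firstStack d e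
  | 3, [d, e] => PointsTo secondStack d e
  | 4, l => ∃ i ∈ P, l = [state i.state, symbol i.read, symbol i.write, state i.keep,
      state i.swap, dump]
  | 5, [d] => d = state qh
  | _, _ => False

variable [Encodable σ] [Encodable Γ]

/-- The constants of the intended model; those that code nothing denote the dump. -/
def modelCst (c : ℕ) : Element σ Γ :=
  match c.unpair with
  | (1, j) => stack (.mk (w.drop j))
  | (2, j) => cell (w.getI j) (.mk (w.drop (min (j + 1) w.length)))
  | (3, _) => config q₀ (.mk w) default
  | (4, n) => (Encodable.decode n).elim dump symbol
  | (5, n) => (Encodable.decode n).elim dump state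
  | _ => dump

/-- The intended model of the encoding of a two-stack machine. -/
abbrev model : Interp where
  Dom := Element σ Γ
  inh := ⟨dump⟩
  rel := modelRel P q₀ qh w
  cst := modelCst q₀ w

theorem satFacts_model : satFacts (model P q₀ qh w) (machineFacts P q₀ qh w) := by
  intro ν a ha
  simp only [machineFacts, inputFacts, controlFacts, instrFacts, List.mem_append,
    List.mem_flatMap, List.mem_cons, List.not_mem_nil, or_false] at ha
  obtain ⟨j, -, ha⟩ | ha | ⟨i, hi, ha⟩ := ha
  · rcases ha with rfl | rfl | rfl | rfl | rfl | rfl | rfl <;>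
      simp [sat_fact, modelRel, modelCst, IsNode, HasLabel, PointsTo, firstStack, secondStack,
        dumpConst, stackConst, cellConst, symbolConst, cons_mk_drop, -ListBlank.cons_mk]
  · rcases ha with rfl | rfl | rfl | rfl | rfl | rfl | rfl | rfl <;>
      simp [sat_fact, modelRel, modelCst, IsNode, HasLabel, PointsTo, firstStack, secondStack,
        dumpConst, stackConst, startConst, stateConst, Reachable.init]
    rfl
  · rcases ha with rfl | rfl | rfl | rfl
    · exact sat_fact.2 ⟨i, hi, by simp [modelCst, dumpConst, symbolConst, stateConst]⟩
    all_goals simp [sat_fact, modelRel, modelCst, HasLabel, dumpConst]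

theorem stepRule_sat_model : stepRule.sat (model P q₀ qh w) := by
  intro ν hν
  simp only [stepRule, stepBody, List.forall_mem_cons, FAtom.sat,
    List.map_cons, List.map_nil, FTerm.eval, modelRel] at hν
  obtain ⟨hf, hfq, hfX, hfY, he, hea, heX, heX', -, -, -, ⟨i, hi, hrow⟩, -⟩ := hν
  simp only [List.cons.injEq, and_true] at hrow
  obtain ⟨h₁, h₅, h₇, h₈, h₉, h₁₀⟩ := hrow
  rw [h₁] at hfq
  rw [h₅] at hea
  obtain ⟨X, Y, h₀, hreach⟩ := eq_config_of_hasLabel hf hfq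
  obtain ⟨X', h₄⟩ := eq_cell_of_hasLabel he hea
  have h₂ : ν 2 = stack X := by simpa [h₀, PointsTo, firstStack] using hfX
  have h₃ : ν 3 = stack Y := by simpa [h₀, PointsTo, secondStack] using hfY
  have h₆ : ν 6 = stack X' := by simpa [h₄, PointsTo, secondStack] using heX'
  obtain rfl : X'.cons i.read = X := by simpa [h₂, h₄, PointsTo, firstStack] using heX
  let Z : Element σ Γ := stack (Y.cons i.write)
  let new : List (Element σ Γ) := [cell i.write Y, config i.keep X' (Y.cons i.write),
    config i.swap (Y.cons i.write) X', Z, Z, Z, dump, dump]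
  refine ⟨fun v => if v < 11 then ν v else new.getD (v - 11) dump,
    fun v hv => if_pos (mem_atomsVars_stepBody.1 hv), ?_⟩
  simp [stepRule, stepHead, FAtom.sat, FTerm.eval, modelRel, h₃, h₆, h₇, h₈, h₉, h₁₀, new, Z,
    IsNode, HasLabel, PointsTo, firstStack, secondStack, hreach.keep hi, hreach.swap hi]

theorem rules_sat_model : ∀ r ∈ stepRules ++ edgeTransRules, r.sat (model P q₀ qh w) := by
  intro r hr
  obtain hr | hr := List.mem_append.1 hr
  · obtain rfl | hr := List.mem_cons.1 hr
    · exact stepRule_sat_model P q₀ qh w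
    · exact ERule.sat_of_head_subset (head_subset_body_of_mem_nodeRules r hr)
  · simp only [edgeTransRules, List.mem_cons, List.not_mem_nil, or_false] at hr
    obtain rfl | rfl := hr
    · exact transRule_sat_iff.2 fun _ _ _ => PointsTo.trans fun _ => rfl
    · exact transRule_sat_iff.2 fun _ _ _ => PointsTo.trans fun _ => rfl

theorem reachable_of_satCQ_goalBody (h : satCQ (model P q₀ qh w) goalBody) :
    ∃ X Y, Reachable P q₀ w qh X Y := by
  obtain ⟨ν, hν⟩ := h
  simp only [goalBody, List.forall_mem_cons, FAtom.sat, List.map_cons, List.map_nil, FTerm.eval,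
    modelRel] at hν
  obtain ⟨hnode, hlabel, -, -, -, -, hhalt, -⟩ := hν
  obtain ⟨X, Y, -, hreach⟩ := eq_config_of_hasLabel hnode (hhalt ▸ hlabel)
  exact ⟨X, Y, hreach⟩

end Soundness

section Completeness

variable [Encodable Γ] {I : Interp} {w : List Γ}

/-- The node `d` represents the given stack in `I`. -/
inductive Represents (I : Interp) (w : List Γ) : I.Dom → ListBlank Γ → Prop
  | input {j : ℕ} (hj : j ≤ w.length) : Represents I w (I.cst (stackConst j)) (.mk (w.drop j))
  | cons {d d' e : I.Dom} {a : Γ} {X : ListBlank Γ} (hX : Represents I w d' X)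
      (he : I.rel 0 [e]) (hea : I.rel 1 [e, I.cst (symbolConst a)]) (hed : I.rel 2 [e, d])
      (hed' : I.rel 3 [e, d']) (hd : I.rel 0 [d]) (hS : I.rel 2 [I.cst dumpConst, d])
      (hT : I.rel 3 [I.cst dumpConst, d]) : Represents I w d (X.cons a)

variable [Encodable σ]

/-- Some node of `I` represents the given configuration. -/
def RepresentsConfig (I : Interp) (w : List Γ) (q : σ) (X Y : ListBlank Γ) : Prop :=
  ∃ c x y, I.rel 0 [c] ∧ I.rel 1 [c, I.cst (stateConst q)] ∧ I.rel 2 [c, x] ∧ I.rel 3 [c, y] ∧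
    Represents I w x X ∧ Represents I w y Y

variable {P : List (Instr σ Γ)} {q₀ qh : σ} {d : I.Dom} {X Y : ListBlank Γ}

theorem rel_of_fact_mem (hF : satFacts I (machineFacts P q₀ qh w)) {p : ℕ} {cs : List ℕ}
    (h : fact p cs ∈ machineFacts P q₀ qh w) : I.rel p (cs.map I.cst) :=
  sat_fact.1 (hF (fun _ => I.cst 0) _ h)

theorem mem_machineFacts_of_input {j : ℕ} {a : FAtom} (hj : j ≤ w.length)
    (h : a ∈ inputFacts w j) : a ∈ machineFacts P q₀ qh w :=
  List.mem_append_left _ (List.mem_flatMap.2 ⟨j, List.mem_range.2 (Nat.lt_succ_of_le hj), h⟩)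

theorem mem_machineFacts_of_control {a : FAtom} (h : a ∈ controlFacts q₀ qh w.length) :
    a ∈ machineFacts P q₀ qh w :=
  List.mem_append_right _ (List.mem_append_left _ h)

theorem mem_machineFacts_of_instr {i : Instr σ Γ} {a : FAtom} (hi : i ∈ P)
    (h : a ∈ instrFacts i) : a ∈ machineFacts P q₀ qh w :=
  List.mem_append_right _ (List.mem_append_right _ (List.mem_flatMap.2 ⟨i, hi, h⟩))

theorem Represents.rel_dump (hF : satFacts I (machineFacts P q₀ qh w)) (h : Represents I w d X) :
    I.rel 0 [d] ∧ I.rel 2 [I.cst dumpConst, d] ∧ I.rel 3 [I.cst dumpConst, d] := by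
  cases h with
  | @input j hj =>
    have hrel (p cs) (h : fact p cs ∈ inputFacts w j) : I.rel p (cs.map I.cst) :=
      rel_of_fact_mem hF (mem_machineFacts_of_input hj h)
    exact ⟨hrel 0 [_] (by simp [inputFacts]), hrel 2 [_, _] (by simp [inputFacts]),
      hrel 3 [_, _] (by simp [inputFacts])⟩
  | cons _ _ _ _ _ hd hS hT => exact ⟨hd, hS, hT⟩

theorem Represents.exists_cell (hF : satFacts I (machineFacts P q₀ qh w)) {a : Γ}
    (h : Represents I w d (X.cons a)) : ∃ e d', Represents I w d' X ∧ I.rel 0 [e] ∧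
      I.rel 1 [e, I.cst (symbolConst a)] ∧ I.rel 2 [e, d] ∧ I.rel 3 [e, d'] := by
  generalize hY : X.cons a = Y at h
  cases h with
  | @input j hj =>
    obtain ⟨rfl, rfl⟩ := listBlank_cons_inj (hY.trans (cons_mk_drop w j).symm)
    have hrel (p cs) (h : fact p cs ∈ inputFacts w j) : I.rel p (cs.map I.cst) :=
      rel_of_fact_mem hF (mem_machineFacts_of_input hj h)
    exact ⟨_, _, .input (min_le_right _ _), hrel 0 [cellConst j] (by simp [inputFacts]),
      hrel 1 [_, _] (by simp [inputFacts]), hrel 2 [_, _] (by simp [inputFacts]),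
      hrel 3 [_, _] (by simp [inputFacts])⟩
  | cons hX he hea hed hed' =>
    obtain ⟨rfl, rfl⟩ := listBlank_cons_inj hY
    exact ⟨_, _, hX, he, hea, hed, hed'⟩

theorem RepresentsConfig.init (hF : satFacts I (machineFacts P q₀ qh w)) :
    RepresentsConfig I w q₀ (.mk w) default := by
  have hrel (p cs) (h : fact p cs ∈ controlFacts q₀ qh w.length) : I.rel p (cs.map I.cst) :=
    rel_of_fact_mem hF (mem_machineFacts_of_control h)
  have hY : Represents I w (I.cst (stackConst w.length)) default := by
    have h : Represents I w _ (.mk (w.drop w.length)) := .input le_rfl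
    rwa [List.drop_length] at h
  exact ⟨_, _, _, hrel 0 [startConst] (by simp [controlFacts]),
    hrel 1 [_, _] (by simp [controlFacts]), hrel 2 [_, _] (by simp [controlFacts]),
    hrel 3 [_, _] (by simp [controlFacts]), .input (Nat.zero_le _), hY⟩

theorem RepresentsConfig.exists_stepHead_sat (hF : satFacts I (machineFacts P q₀ qh w))
    (hR : stepRule.sat I) {i : Instr σ Γ} (hi : i ∈ P)
    (h : RepresentsConfig I w i.state (X.cons i.read) Y) :
    ∃ ν, Represents I w (ν 6) X ∧ Represents I w (ν 3) Y ∧ ν 7 = I.cst (symbolConst i.write) ∧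
      ν 8 = I.cst (stateConst i.keep) ∧ ν 9 = I.cst (stateConst i.swap) ∧
      ν 10 = I.cst dumpConst ∧ ∀ a ∈ stepHead, a.sat I ν := by
  obtain ⟨c, x, y, hc, hcq, hcx, hcy, hx, hy⟩ := h
  obtain ⟨e, x', hx', he, hea, hex, hex'⟩ := hx.exists_cell hF
  have hcontrol (p cs) (h : fact p cs ∈ controlFacts q₀ qh w.length) : I.rel p (cs.map I.cst) :=
    rel_of_fact_mem hF (mem_machineFacts_of_control h)
  have hinstr (p cs) (h : fact p cs ∈ instrFacts i) : I.rel p (cs.map I.cst) :=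
    rel_of_fact_mem hF (mem_machineFacts_of_instr hi h)
  let l : List I.Dom := [c, I.cst (stateConst i.state), x, y, e, I.cst (symbolConst i.read), x',
    I.cst (symbolConst i.write), I.cst (stateConst i.keep), I.cst (stateConst i.swap),
    I.cst dumpConst]
  obtain ⟨ν, hν, hhead⟩ := hR (l.getD · c) (by
    simp only [stepRule, stepBody, List.mem_cons, List.not_mem_nil, or_false, forall_eq_or_imp,
      forall_eq]
    exact ⟨hc, hcq, hcx, hcy, he, hea, hex, hex', (hx.rel_dump hF).1, (hy.rel_dump hF).1,
      (hx'.rel_dump hF).1, hinstr 4 [_, _, _, _, _, _] (by simp [instrFacts]),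
      hinstr 1 [_, _] (by simp [instrFacts]), hinstr 1 [_, _] (by simp [instrFacts]),
      hinstr 1 [_, _] (by simp [instrFacts]), (hy.rel_dump hF).2.2, (hx'.rel_dump hF).2.1,
      (hx'.rel_dump hF).2.2, hcontrol 2 [_, _] (by simp [controlFacts]),
      hcontrol 3 [_, _] (by simp [controlFacts]), hcontrol 1 [_, _] (by simp [controlFacts])⟩)
  have hl (v) (hv : v < 11) : ν v = l.getD v c := hν v (mem_atomsVars_stepBody.2 hv)
  refine ⟨ν, ?_, ?_, hl 7 (by decide), hl 8 (by decide), hl 9 (by decide), hl 10 (by decide),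
    hhead⟩
  · rwa [hl 6 (by decide)]
  · rwa [hl 3 (by decide)]

theorem RepresentsConfig.step (hF : satFacts I (machineFacts P q₀ qh w))
    (hR : ∀ r ∈ stepRules ++ edgeTransRules, r.sat I) {i : Instr σ Γ} (hi : i ∈ P)
    (h : RepresentsConfig I w i.state (X.cons i.read) Y) :
    RepresentsConfig I w i.keep X (Y.cons i.write) ∧
      RepresentsConfig I w i.swap (Y.cons i.write) X := by
  obtain ⟨ν, hX, hY, hν₇, hν₈, hν₉, hν₁₀, hhead⟩ :=
    h.exists_stepHead_sat hF (hR stepRule (by simp [stepRules])) hi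
  have hS : ∀ u v t, I.rel 2 [u, v] → I.rel 2 [v, t] → I.rel 2 [u, t] :=
    transRule_sat_iff.1 (hR (transRule 2) (by simp [edgeTransRules]))
  have hT : ∀ u v t, I.rel 3 [u, v] → I.rel 3 [v, t] → I.rel 3 [u, t] :=
    transRule_sat_iff.1 (hR (transRule 3) (by simp [edgeTransRules]))
  simp only [stepHead, List.forall_mem_cons, FAtom.sat, List.map_cons, List.map_nil, FTerm.eval,
    hν₇, hν₈, hν₉, hν₁₀] at hhead
  obtain ⟨h₁₁, h₁₂, h₁₃, h₁₄, hl₁₁, hl₁₂, hl₁₃, hT₁₁, hS₁₂, hT₁₃, hS₁₁, hS₁₃, hS₁₀, hS₁₅, hT₁₂,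
    hT₁₀, hT₁₆, -⟩ := hhead
  have hY' : Represents I w (ν 14) (Y.cons i.write) :=
    .cons hY h₁₁ hl₁₁ (hS _ _ _ hS₁₁ hS₁₅) hT₁₁ h₁₄ (hS _ _ _ hS₁₀ hS₁₅) (hT _ _ _ hT₁₀ hT₁₆)
  exact ⟨⟨_, _, _, h₁₂, hl₁₂, hS₁₂, hT _ _ _ hT₁₂ hT₁₆, hX, hY'⟩,
    ⟨_, _, _, h₁₃, hl₁₃, hS _ _ _ hS₁₃ hS₁₅, hT₁₃, hY', hX⟩⟩

theorem Reachable.representsConfig (hF : satFacts I (machineFacts P q₀ qh w))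
    (hR : ∀ r ∈ stepRules ++ edgeTransRules, r.sat I) {q : σ} (h : Reachable P q₀ w q X Y) :
    RepresentsConfig I w q X Y := by
  induction h with
  | init => exact .init hF
  | keep hi _ ih => exact (ih.step hF hR hi).1
  | swap hi _ ih => exact (ih.step hF hR hi).2

theorem Reachable.entails_goalBody (h : Reachable P q₀ w qh X Y) :
    entails (machineFacts P q₀ qh w) (stepRules ++ edgeTransRules) goalBody := by
  intro I hF hR
  obtain ⟨c, x, y, hc, hcq, hcx, hcy, hx, hy⟩ := h.representsConfig hF hR
  have hhalt : I.rel 5 [I.cst (stateConst qh)] :=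
    rel_of_fact_mem hF (cs := [_]) (mem_machineFacts_of_control (by simp [controlFacts]))
  refine ⟨([c, I.cst (stateConst qh), x, y].getD · c), ?_⟩
  simp only [goalBody, List.mem_cons, List.not_mem_nil, or_false, forall_eq_or_imp, forall_eq]
  exact ⟨hc, hcq, hcx, hcy, (hx.rel_dump hF).1, (hy.rel_dump hF).1, hhalt⟩

end Completeness

/-- The rule set of the encoding, apart from transitivity. -/
def machineRules : List ERule := goalRules goalBody 6 ++ stepRules

theorem goal_notMem_atomsPreds : 6 ∉ atomsPreds goalBody := by
  simp [atomsPreds, goalBody]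

theorem goal_notMem_rulesPreds : 6 ∉ rulesPreds (stepRules ++ edgeTransRules) := by
  have h : ∀ r ∈ stepRules ++ edgeTransRules, ∀ a ∈ r.body ++ r.head, a.pred ≠ 6 := by decide
  rintro ⟨r, hr, a, ha, hg⟩
  exact h r hr a ha hg

theorem goal_notMem_rulesPreds_stepRules : 6 ∉ rulesPreds stepRules :=
  fun ⟨r, hr, h⟩ => goal_notMem_rulesPreds ⟨r, List.mem_append_left _ hr, h⟩

theorem entails_goal_iff [Encodable σ] [Encodable Γ] {P : List (Instr σ Γ)} {q₀ qh : σ}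
    {w : List Γ} : entails (machineFacts P q₀ qh w) (machineRules ++ edgeTransRules) [⟨6, []⟩] ↔
      ∃ X Y, Reachable P q₀ w qh X Y := by
  rw [machineRules, List.append_assoc]
  constructor
  · intro h
    exact reachable_of_satCQ_goalBody P q₀ qh w (satCQ_body_of_entails_goal h
      (satFacts_model P q₀ qh w) (rules_sat_model P q₀ qh w) goal_notMem_rulesPreds
      goal_notMem_atomsPreds id)
  · rintro ⟨X, Y, h⟩
    exact entails_goal_of_entails_body h.entails_goalBody

theorem isFES_machineRules : isFES machineRules :=
  isFES_stepRules.addGoal goal_notMem_rulesPreds_stepRules goal_notMem_atomsPreds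

theorem isFUS_machineRules : isFUS machineRules :=
  isFUS_stepRules.addGoal isFES_stepRules goal_notMem_rulesPreds_stepRules goal_notMem_atomsPreds

theorem isTransitivityRule_of_mem_edgeTransRules : ∀ r ∈ edgeTransRules, isTransitivityRule r := by
  simp only [edgeTransRules, List.mem_cons, List.not_mem_nil, or_false, forall_eq_or_imp,
    forall_eq]
  exact ⟨⟨2, 0, 1, 2, by decide, by decide, by decide, rfl, rfl⟩,
    ⟨3, 0, 1, 2, by decide, by decide, by decide, rfl, rfl⟩⟩

end Encoding

/-! ### Simulating Turing machines -/

namespace Encoding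

open Turing TM0

variable {Γ Λ : Type}

instance : Encodable Dir :=
  Encodable.ofLeftInverse (fun d => decide (d = .right)) (fun b => bif b then .right else .left)
    (by rintro (_ | _) <;> rfl)

/-- The states of the two-stack machine simulating a Turing machine with states `Λ`. In state
`run q d` the Turing machine is in state `q`, the top of the first stack is the scanned symbol, the
rest of the first stack is the half of the tape in direction `d`, and the second stack is the other
half. -/
inductive State (Λ : Type) where
  | halt
  | dead
  | run (q : Λ) (d : Dir)
  deriving Encodable

/-- The direction reversed. -/
def opposite : Dir → Dir
  | .left => .right
  | .right => .left

@[simp]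
theorem opposite_opposite : ∀ d, opposite (opposite d) = d
  | .left => rfl
  | .right => rfl

theorem eq_or_eq_opposite (d d' : Dir) : d' = d ∨ d' = opposite d := by
  cases d <;> cases d' <;> decide

theorem opposite_ne (d : Dir) : opposite d ≠ d := by
  cases d <;> decide

section Tape

variable [Inhabited Γ]

/-- The symbols on the given side of the head, nearest first. -/
def half : Dir → Tape Γ → ListBlank Γ
  | .left, T => T.left
  | .right, T => T.right

theorem half_move_cons_head (d : Dir) (T : Tape Γ) :
    (half d (T.move d)).cons (T.move d).head = half d T := by
  cases d <;> exact ListBlank.cons_head_tail _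

theorem half_opposite_move (d : Dir) (T : Tape Γ) :
    half (opposite d) (T.move d) = (half (opposite d) T).cons T.head := by
  cases d <;> rfl

theorem half_write (d : Dir) (T : Tape Γ) (b : Γ) : half d (T.write b) = half d T := by
  cases d <;> rfl

end Tape

variable [Inhabited Λ]

/-- The instruction for state `q`, direction `d` and scanned symbol `a`. A step that writes, or that
moves against `d`, turns the configuration around by exchanging the stacks; the branch of the
nondeterministic machine that does not follow the Turing machine ends in `dead`. -/
def simInstr (M : Machine Γ Λ) (q : Λ) (d : Dir) (a : Γ) : Instr (State Λ) Γ :=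
  match M q a with
  | none => ⟨.run q d, a, a, .halt, .dead⟩
  | some (q', .move d') =>
    if d' = d then ⟨.run q d, a, a, .run q' d, .dead⟩
    else ⟨.run q d, a, a, .dead, .run q (opposite d)⟩
  | some (q', .write b) => ⟨.run q d, a, b, .dead, .run q' (opposite d)⟩

theorem simInstr_state_read (M : Machine Γ Λ) (q : Λ) (d : Dir) (a : Γ) :
    (simInstr M q d a).state = .run q d ∧ (simInstr M q d a).read = a := by
  unfold simInstr
  split <;> [skip; split_ifs; skip] <;> exact ⟨rfl, rfl⟩

section Program

variable [Fintype Λ] [Fintype Γ]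

/-- The two-stack machine simulating `M`. -/
noncomputable def simProgram (M : Machine Γ Λ) : List (Instr (State Λ) Γ) :=
  (Finset.univ : Finset (Λ × Γ)).toList.flatMap fun p =>
    [simInstr M p.1 .left p.2, simInstr M p.1 .right p.2]

theorem mem_simProgram {M : Machine Γ Λ} {i : Instr (State Λ) Γ} :
    i ∈ simProgram M ↔ ∃ q d a, i = simInstr M q d a := by
  simp only [simProgram, List.mem_flatMap, Finset.mem_toList, Finset.mem_univ, true_and,
    Prod.exists, List.mem_cons, List.not_mem_nil, or_false]
  constructor
  · rintro ⟨q, a, h | h⟩ <;> exact ⟨q, _, a, h⟩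
  · rintro ⟨q, _ | _, a, h⟩
    exacts [⟨q, a, .inl h⟩, ⟨q, a, .inr h⟩]

end Program

variable [Inhabited Γ] {M : Machine Γ Λ} {w : List Γ}

/-- The configurations of the two-stack machine that correspond to a configuration reached by the
Turing machine `M` on input `w`. -/
def Simulates (M : Machine Γ Λ) (w : List Γ) (X Y : ListBlank Γ) : State Λ → Prop
  | .halt => ∃ c, Reaches M (init w) c ∧ step M c = none
  | .dead => True
  | .run q d =>
    ∃ T, Reaches M (init w) ⟨q, T⟩ ∧ X = (half d T).cons T.head ∧ Y = half (opposite d) T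

theorem Simulates.simInstr {q : Λ} {d : Dir} {a : Γ} {X Y : ListBlank Γ}
    (h : Simulates M w (X.cons a) Y (.run q d)) :
    Simulates M w X (Y.cons (simInstr M q d a).write) (simInstr M q d a).keep ∧
      Simulates M w (Y.cons (simInstr M q d a).write) X (simInstr M q d a).swap := by
  obtain ⟨T, hT, hX, rfl⟩ := h
  obtain ⟨rfl, rfl⟩ := listBlank_cons_inj hX
  unfold Encoding.simInstr
  split
  next hM => exact ⟨⟨_, hT, by simp [step, hM]⟩, trivial⟩
  next q' d' hM =>
    split_ifs with hd
    · subst hd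
      refine ⟨⟨T.move d', hT.tail (by simp [step, hM]), ?_, ?_⟩, trivial⟩
      · rw [half_move_cons_head]
      · rw [half_opposite_move]
    · exact ⟨trivial, T, hT, rfl, by rw [opposite_opposite]⟩
  next q' b hM =>
    refine ⟨trivial, T.write b, hT.tail (by simp [step, hM]), ?_, ?_⟩
    · rw [half_write]; rfl
    · rw [half_write, opposite_opposite]

theorem eval_dom_iff :
    (TM0.eval M w).Dom ↔ ∃ c, Reaches M (init w) c ∧ step M c = none := by
  rw [TM0.eval, Part.map_Dom, Part.dom_iff_mem]
  exact exists_congr fun c => StateTransition.mem_eval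

variable [Fintype Λ] [Fintype Γ]

theorem simulates_of_reachable {s : State Λ} {X Y : ListBlank Γ}
    (h : Reachable (simProgram M) (.run default .right) w s X Y) : Simulates M w X Y s := by
  induction h with
  | init => exact ⟨Tape.mk₁ w, .refl, (ListBlank.cons_head_tail _).symm, rfl⟩
  | keep hi _ ih =>
    obtain ⟨q, d, a, rfl⟩ := mem_simProgram.1 hi
    rw [(simInstr_state_read M q d a).1, (simInstr_state_read M q d a).2] at ih
    exact ih.simInstr.1
  | swap hi _ ih =>
    obtain ⟨q, d, a, rfl⟩ := mem_simProgram.1 hi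
    rw [(simInstr_state_read M q d a).1, (simInstr_state_read M q d a).2] at ih
    exact ih.simInstr.2

section

variable {s₀ : State Λ} {q : Λ} {d : Dir} {a : Γ} {X Y : ListBlank Γ}

theorem Reachable.keep_simInstr (h : Reachable (simProgram M) s₀ w (.run q d) (X.cons a) Y) :
    Reachable (simProgram M) s₀ w (simInstr M q d a).keep X (Y.cons (simInstr M q d a).write) := by
  obtain ⟨hs, hr⟩ := simInstr_state_read M q d a
  exact .keep (mem_simProgram.2 ⟨q, d, a, rfl⟩) (by rwa [hs, hr])

theorem Reachable.swap_simInstr (h : Reachable (simProgram M) s₀ w (.run q d) (X.cons a) Y) :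
    Reachable (simProgram M) s₀ w (simInstr M q d a).swap (Y.cons (simInstr M q d a).write) X := by
  obtain ⟨hs, hr⟩ := simInstr_state_read M q d a
  exact .swap (mem_simProgram.2 ⟨q, d, a, rfl⟩) (by rwa [hs, hr])

end

theorem reachable_of_reaches {c : Cfg Γ Λ} (h : Reaches M (init w) c) :
    ∃ d, Reachable (simProgram M) (.run default .right) w (.run c.q d)
      ((half d c.Tape).cons c.Tape.head) (half (opposite d) c.Tape) := by
  induction h with
  | refl =>
    refine ⟨.right, ?_⟩
    have h := Reachable.init (P := simProgram M) (q₀ := .run default .right) (w := w)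
    rwa [← ListBlank.cons_head_tail (.mk w)] at h
  | @tail c c' _ hstep ih =>
    obtain ⟨d, ih⟩ := ih
    obtain ⟨⟨q', stmt⟩, hM, rfl⟩ := Option.map_eq_some_iff.1 hstep
    have hkeep := ih.keep_simInstr
    have hswap := ih.swap_simInstr
    obtain d' | b := stmt
    · obtain rfl | rfl := eq_or_eq_opposite d d'
      · refine ⟨d', ?_⟩
        simpa [simInstr, hM, half_move_cons_head, half_opposite_move] using hkeep
      · have hturn : Reachable (simProgram M) (.run default .right) w (.run c.q (opposite d))
            ((half (opposite d) c.Tape).cons c.Tape.head) (half d c.Tape) := by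
          simpa [simInstr, hM, opposite_ne] using hswap
        refine ⟨opposite d, ?_⟩
        have hmove := hturn.keep_simInstr
        have := half_opposite_move (opposite d) c.Tape
        rw [opposite_opposite] at this
        simpa [simInstr, hM, half_move_cons_head, this] using hmove
    · refine ⟨opposite d, ?_⟩
      have hhead : (c.Tape.write b).head = b := rfl
      simpa [simInstr, hM, half_write, hhead] using hswap

theorem exists_reachable_halt_iff :
    (∃ X Y, Reachable (simProgram M) (.run default .right) w .halt X Y) ↔ (TM0.eval M w).Dom := by
  rw [eval_dom_iff]
  constructor
  · rintro ⟨X, Y, h⟩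
    exact simulates_of_reachable h
  · rintro ⟨c, hc, hstep⟩
    obtain ⟨d, h⟩ := reachable_of_reaches hc
    have hM : M c.q c.Tape.head = none := by simpa [step] using hstep
    exact ⟨_, _, by simpa [simInstr, hM] using h.keep_simInstr⟩

end Encoding

/-! ### Universal machines -/

namespace Encoding

open Turing TM0

section FiniteStates

variable {Γ Λ : Type} [Inhabited Γ] [Inhabited Λ]

theorem exists_fintype_machine_of_supports {M : Machine Γ Λ} {S : Finset Λ}
    (hS : Supports M (S : Set Λ)) :
    ∃ (Λ' : Type) (_ : Inhabited Λ') (_ : Fintype Λ') (M' : Machine Γ Λ'),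
      ∀ w, (TM0.eval M' w).Dom ↔ (TM0.eval M w).Dom := by
  classical
  let _ : Inhabited S := ⟨⟨default, hS.1⟩⟩
  let toS : PointedMap Λ S := ⟨fun q => if h : q ∈ S then ⟨q, h⟩ else default, dif_pos hS.1⟩
  let f : PointedMap Γ Γ := ⟨id, rfl⟩
  have hf : ∀ w : List Γ, w.map f = w := List.map_id
  have hrespects := Machine.map_respects M f f toS Subtype.val hS (fun _ => rfl) fun q hq =>
    congrArg Subtype.val (dif_pos hq)
  refine ⟨S, inferInstance, inferInstance, M.map f f toS Subtype.val, fun w => ?_⟩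
  have hdom := StateTransition.tr_eval_dom hrespects (a₁ := init w) ⟨hS.1, rfl⟩
  rwa [map_init, hf] at hdom

end FiniteStates

section Codes

open PartrecToTM2

instance : Fintype K' := ⟨{.main, .rev, .aux, .stack}, by rintro (_ | _ | _ | _) <;> simp⟩

/-- The tape alphabet of Mathlib's compilation of partial recursive functions. -/
abbrev TapeSymbol : Type := TM2to1.Γ' K' fun _ => PartrecToTM2.Γ'

/-- The initial tape of the compiled machine on input `v`. -/
def tapeInput (v : List ℕ) : List TapeSymbol := TM2to1.trInit K'.main (trList v)

theorem exists_machine_of_code (c : ToPartrec.Code) :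
    ∃ (Λ : Type) (_ : Inhabited Λ) (_ : Fintype Λ) (M : Machine TapeSymbol Λ),
      ∀ v, (TM0.eval M (tapeInput v)).Dom ↔ (c.eval v).Dom := by
  let _ : Inhabited Λ' := ⟨trNormal c .halt⟩
  obtain ⟨Λ, hΛ, hΛ', M, hM⟩ := exists_fintype_machine_of_supports
    (TM1to0.tr_supports _ (TM2to1.tr_supports _ (tr_supports c .halt)))
  have hinit (v : List ℕ) : TM2.init K'.main (trList v) = PartrecToTM2.init c v := by
    simp only [TM2.init, PartrecToTM2.init]
    congr 1
    funext k
    cases k <;> simp [K'.elim]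
  refine ⟨Λ, hΛ, hΛ', M, fun v => ?_⟩
  calc (TM0.eval M (tapeInput v)).Dom
      ↔ (TM1.eval (TM2to1.tr tr) (tapeInput v)).Dom := by rw [hM, TM1to0.tr_eval]
    _ ↔ (TM2.eval tr K'.main (trList v)).Dom := TM2to1.tr_eval_dom tr K'.main (trList v)
    _ ↔ (StateTransition.eval (TM2.step tr) (PartrecToTM2.init c v)).Dom := by
      rw [← hinit]; rfl
    _ ↔ (c.eval v).Dom := by rw [tr_eval]; rfl

theorem exists_pos_eq_two_pow (m : ℕ) : ∃ p : PosNum, ((2 ^ m : ℕ) : Num) = .pos p ∧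
    trPosNum p = List.replicate m .bit0 ++ [.bit1] := by
  induction m with
  | zero => exact ⟨1, by rw [pow_zero, Nat.cast_one]; rfl, rfl⟩
  | succ m ih =>
    obtain ⟨p, hp, htr⟩ := ih
    refine ⟨p.bit0, ?_, ?_⟩
    · rw [pow_succ, mul_two, Nat.cast_add, hp, Num.bit0_of_bit0]
      rfl
    · rw [trPosNum, htr, List.replicate_succ]
      rfl

theorem trNat_two_pow (m : ℕ) : trNat (2 ^ m) = List.replicate m .bit0 ++ [.bit1] := by
  obtain ⟨p, hp, htr⟩ := exists_pos_eq_two_pow m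
  rw [trNat, hp, trNum, htr]

/-- The tape symbol carrying `a` on the input stack and nothing on the others; `bottom` marks the
bottom of the stacks. -/
def inputSymbol (bottom : Bool) (a : PartrecToTM2.Γ') : TapeSymbol :=
  (bottom, Function.update (fun _ => none) .main (some a))

theorem tapeInput_two_pow (m : ℕ) :
    tapeInput [2 ^ m] = inputSymbol true .cons :: inputSymbol false .bit1 ::
      (List.range m).map fun _ => inputSymbol false .bit0 := by
  have hreverse : (trList [2 ^ m]).reverse = .cons :: .bit1 :: List.replicate m .bit0 := by
    simp [trNat_two_pow]
  rw [tapeInput, TM2to1.trInit, hreverse, List.map_const', List.length_range,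
    ← List.map_replicate (f := inputSymbol false)]
  rfl

theorem primrec_tapeInput_two_pow [Primcodable TapeSymbol] :
    Primrec fun m => tapeInput [2 ^ m] := by
  simp only [tapeInput_two_pow]
  exact Primrec.list_cons.comp (.const _) <| Primrec.list_cons.comp (.const _) <|
    Primrec.list_map Primrec.list_range (Primrec.const _).to₂

end Codes

theorem exists_code_dom_iff {f : ℕ →. ℕ} (hf : Partrec f) :
    ∃ c : ToPartrec.Code, ∀ n, (c.eval [n]).Dom ↔ (f n).Dom := by
  obtain ⟨c, hc⟩ := ToPartrec.Code.exists_code (Nat.Partrec'.part_iff₁.2 hf)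
  refine ⟨c, fun n => ?_⟩
  have heval : c.eval [n] = pure <$> f n := hc (n ::ᵥ .nil)
  rw [heval]
  rfl

theorem primrec_findGreatest_two_pow :
    Primrec fun n : ℕ => n.findGreatest fun i => 2 ^ i = n := by
  have hpow : Primrec₂ fun a b : ℕ => a ^ b := Primrec₂.unpaired'.1 Nat.Primrec.pow
  exact Primrec.nat_findGreatest Primrec.id
    (Primrec.eq.comp (hpow.comp (Primrec.const 2) Primrec.snd) Primrec.fst)

theorem findGreatest_two_pow (m : ℕ) : ((2 ^ m).findGreatest fun i => 2 ^ i = 2 ^ m) = m :=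
  Nat.findGreatest_eq_iff.2 ⟨Nat.lt_two_pow_self.le, fun _ => rfl,
    fun _ hlt _ h => hlt.ne' (Nat.pow_right_injective le_rfl h)⟩

theorem exists_universal_machine :
    ∃ (Λ : Type) (_ : Inhabited Λ) (_ : Fintype Λ) (M : Machine TapeSymbol Λ),
      ∀ c : Nat.Partrec.Code,
        (TM0.eval M (tapeInput [2 ^ Encodable.encode c])).Dom ↔ (c.eval 0).Dom := by
  obtain ⟨u, hu⟩ := exists_code_dom_iff (Nat.Partrec.Code.eval_part.comp
    ((Computable.ofNat Nat.Partrec.Code).comp primrec_findGreatest_two_pow.to_comp)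
    (Computable.const 0))
  obtain ⟨Λ, hΛ, hΛ', M, hM⟩ := exists_machine_of_code u
  refine ⟨Λ, hΛ, hΛ', M, fun c => ?_⟩
  rw [hM, hu, findGreatest_two_pow, Denumerable.ofNat_encode]

end Encoding

/-! ### Computability of the reduction -/

namespace Encoding

theorem primrec_fact {α : Type} [Primcodable α] (p : ℕ) {g : α → List ℕ} (hg : Primrec g) :
    Primrec fun x => fact p (g x) := by
  have hconst : Primrec FTerm.const :=
    (Primrec.of_equiv_symm (e := FTerm.equivSum)).comp Primrec.sumInr
  exact (Primrec.of_equiv_symm (e := FAtom.equivProd)).comp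
    (Primrec.pair (Primrec.const p) (Primrec.list_map hg (hconst.comp Primrec.snd).to₂))

theorem primrec_fact_one {α : Type} [Primcodable α] (p : ℕ) {c : α → ℕ} (hc : Primrec c) :
    Primrec fun x => fact p [c x] :=
  primrec_fact p (Primrec.list_cons.comp hc (Primrec.const []))

theorem primrec_fact_two {α : Type} [Primcodable α] (p : ℕ) {c c' : α → ℕ} (hc : Primrec c)
    (hc' : Primrec c') : Primrec fun x => fact p [c x, c' x] :=
  primrec_fact p (Primrec.list_cons.comp hc (Primrec.list_cons.comp hc' (Primrec.const [])))

variable {σ Γ : Type} [Encodable σ] [Primcodable Γ]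

theorem primrec_stackConst : Primrec stackConst :=
  Primrec₂.natPair.comp (Primrec.const 1) Primrec.id

theorem primrec_cellConst : Primrec cellConst :=
  Primrec₂.natPair.comp (Primrec.const 2) Primrec.id

theorem primrec_symbolConst : Primrec (symbolConst (Γ := Γ)) :=
  Primrec₂.natPair.comp (Primrec.const 4) Primrec.encode

theorem primrec_controlFacts (q₀ qh : σ) : Primrec (controlFacts q₀ qh) :=
  Primrec.list_append.comp (.const ((controlFacts q₀ qh 0).take 6)) <|
    Primrec.list_cons.comp
      (primrec_fact_two 3 (.const startConst) primrec_stackConst) (.const [fact 5 [stateConst qh]])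

variable [Inhabited Γ]

theorem primrec_inputFacts : Primrec₂ (inputFacts (Γ := Γ)) := by
  have hstack : Primrec fun x : List Γ × ℕ => stackConst x.2 := primrec_stackConst.comp .snd
  have hcell : Primrec fun x : List Γ × ℕ => cellConst x.2 := primrec_cellConst.comp .snd
  have hsymbol : Primrec fun x : List Γ × ℕ => symbolConst (x.1.getI x.2) :=
    primrec_symbolConst.comp Primrec.list_getI
  have hnext : Primrec fun x : List Γ × ℕ => stackConst (min (x.2 + 1) x.1.length) :=
    primrec_stackConst.comp (Primrec.nat_min.comp (Primrec.succ.comp .snd)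
      (Primrec.list_length.comp .fst))
  exact Primrec.list_cons.comp (primrec_fact_one 0 hstack) <|
    Primrec.list_cons.comp (primrec_fact_one 0 hcell) <|
    Primrec.list_cons.comp (primrec_fact_two 1 hcell hsymbol) <|
    Primrec.list_cons.comp (primrec_fact_two 2 hcell hstack) <|
    Primrec.list_cons.comp (primrec_fact_two 3 hcell hnext) <|
    Primrec.list_cons.comp (primrec_fact_two 2 (.const dumpConst) hstack) <|
    Primrec.list_cons.comp (primrec_fact_two 3 (.const dumpConst) hstack) (.const [])

theorem primrec_machineFacts (P : List (Instr σ Γ)) (q₀ qh : σ) :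
    Primrec (machineFacts P q₀ qh) :=
  Primrec.list_append.comp
    (Primrec.list_flatMap (Primrec.list_range.comp (Primrec.succ.comp .list_length))
      primrec_inputFacts)
    (Primrec.list_append.comp ((primrec_controlFacts q₀ qh).comp .list_length)
      (.const (P.flatMap instrFacts)))

theorem not_exists_decider_of_reduction {Rs T : List ERule} {Q : FAtom}
    {F : Nat.Partrec.Code → List FAtom} (hF : Computable F) (hbase : ∀ c, isFactBase (F c))
    (hreduces : ∀ c, entails (F c) (Rs ++ T) [Q] ↔ (c.eval 0).Dom) :
    ¬ ∃ f : List FAtom × List ERule × List ERule × FAtom → Bool, Computable f ∧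
      ∀ F, isFactBase F → (f (F, Rs, T, Q) = true ↔ entails F (Rs ++ T) [Q]) := by
  rintro ⟨f, hf, hdecides⟩
  have hfF : Computable fun c => f (F c, Rs, T, Q) :=
    hf.comp (hF.pair (Computable.const (Rs, T, Q)))
  refine ComputablePred.halting_problem 0
    (ComputablePred.computable_iff.2 ⟨_, hfF, funext fun c => propext ?_⟩)
  rw [hdecides _ (hbase c), hreduces]

theorem not_exists_decider : ¬ ∃ f : List FAtom × List ERule × List ERule × FAtom → Bool,
    Computable f ∧ ∀ F, isFactBase F → (f (F, machineRules, edgeTransRules, ⟨6, []⟩) = true ↔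
      entails F (machineRules ++ edgeTransRules) [⟨6, []⟩]) := by
  obtain ⟨Λ, _, _, M, hM⟩ := exists_universal_machine
  obtain ⟨_⟩ : Nonempty (Primcodable TapeSymbol) := ⟨.ofEquiv _ (Fintype.equivFin TapeSymbol)⟩
  let _ : Encodable Λ := .ofCountable Λ
  refine not_exists_decider_of_reduction
    (F := fun c => machineFacts (simProgram M) (.run default .right) .halt
      (tapeInput [2 ^ Encodable.encode c])) ?_ (fun c => ?_) fun c => ?_
  · exact ((primrec_machineFacts _ _ _).comp (primrec_tapeInput_two_pow.comp .encode)).to_comp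
  · exact isFactBase_machineFacts _ _ _ _
  · rw [entails_goal_iff, exists_reachable_halt_iff, hM]

end Encoding

/-- Atomic CQ entailment is undecidable both over fus+trans and over
fes+trans knowledge bases: in each case there is no computable function that is correct
on all valid inputs (fact base, fus (resp. fes) rule set together with transitivity
rules, atomic CQ). -/
theorem fus_fes_plus_trans_atomicCQ_undecidable :
    (¬ ∃ f : List FAtom × List ERule × List ERule × FAtom → Bool, Computable f ∧
      ∀ (F : List FAtom) (Rs T : List ERule) (Q : FAtom),
        isFactBase F → isFUS Rs → (∀ t ∈ T, isTransitivityRule t) →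
        (f (F, Rs, T, Q) = true ↔ entails F (Rs ++ T) [Q])) ∧
    (¬ ∃ f : List FAtom × List ERule × List ERule × FAtom → Bool, Computable f ∧
      ∀ (F : List FAtom) (Rs T : List ERule) (Q : FAtom),
        isFactBase F → isFES Rs → (∀ t ∈ T, isTransitivityRule t) →
        (f (F, Rs, T, Q) = true ↔ entails F (Rs ++ T) [Q])) := by
  constructor
  · rintro ⟨f, hf, h⟩
    exact Encoding.not_exists_decider ⟨f, hf, fun F hF => h F _ _ _ hF
      Encoding.isFUS_machineRules Encoding.isTransitivityRule_of_mem_edgeTransRules⟩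
  · rintro ⟨f, hf, h⟩
    exact Encoding.not_exists_decider ⟨f, hf, fun F hF => h F _ _ _ hF
      Encoding.isFES_machineRules Encoding.isTransitivityRule_of_mem_edgeTransRules⟩
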